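/- Let θ be a proper, primitive, aperiodic substitution on a finite alphabet A, let (X^θ, T) be the associated substitution subshift (a minimal Cantor system), and let S be a bounded speedup of T which is minimal. Then (X^θ, S) is topologically conjugate to a substitution subshift: there exist a finite alphabet B, a proper, primitive, aperiodic substitution τ : B → B*, and a homeomorphism ψ : X^θ → X^τ such that ψ∘S = T_τ∘ψ, where T_τ denotes the left shift on X^τ. -/

import Mathlib

/-- The left shift on bi-infinite sequences. -/
def shiftMap {A : Type*} : (ℤ → A) → (ℤ → A) := fun x k => x (k + 1)

/-- The `k`-th iterate of the substitution `θ` applied to the letter `a`. -/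
def substIter {A : Type*} (θ : A → List A) (k : ℕ) (a : A) : List A :=
  (fun w : List A => w.flatMap θ)^[k] [a]

/-- A substitution is primitive if every letter eventually appears in every iterate, and all
iterate lengths tend to infinity. -/
def SubstPrimitive {A : Type*} (θ : A → List A) : Prop :=
  (∀ a b : A, ∃ k : ℕ, b ∈ substIter θ k a) ∧
  ∀ a : A, Filter.Tendsto (fun k => (substIter θ k a).length) Filter.atTop Filter.atTop

/-- A substitution is proper if for some `k`, all the words `θ^k(a)` begin with a common
letter `l` and end with a common letter `r`. -/
def SubstProper {A : Type*} (θ : A → List A) : Prop :=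
  ∃ (l r : A) (k : ℕ), ∀ a : A,
    (substIter θ k a).head? = some l ∧ (substIter θ k a).getLast? = some r

/-- The substitution subshift: bi-infinite sequences all of whose finite subwords appear as
subwords of some `θ^k(a)`. -/
def substShift {A : Type*} (θ : A → List A) : Set (ℤ → A) :=
  {x | ∀ (i : ℤ) (n : ℕ), ∃ (k : ℕ) (a : A),
    (List.ofFn fun t : Fin n => x (i + (t : ℕ))) <:+: substIter θ k a}

/-- A substitution is aperiodic if its subshift contains no shift-periodic points. -/
def SubstAperiodic {A : Type*} (θ : A → List A) : Prop :=
  ∀ x ∈ substShift θ, ∀ n : ℕ, 0 < n → shiftMap^[n] x ≠ x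

/-!
Let `ω ∈ X^θ` be fixed by `θ`. In every representation of `ω` as an image under `θ^m` a block
starts at the origin, so by compactness a point close enough to `ω` has a block `θ^m(a)` starting
at its origin. If the speedup `S` jumps by at most `M`, then the ways in which it can cross such
a block form a relation between `M` entrances and `M` exits. There are finitely many such
relations, so for some `m` and infinitely many `q` the blocks of the levels `m` and `m + q` are
crossed in the same ways, and `θ^q` maps the segments of `S`-orbits between visits to a
neighbourhood `U` of `ω` to segments of `S`-orbits. The tower of `S` over `U` is therefore
self-similar, and distributing its floors over visits close to `ω` turns the self-similarity
into a proper primitive substitution on the words that are read in windows around the origin.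
-/

open Filter Topology

section Window

variable {A : Type*}

/-- The word of length `n` read in `x` from position `i` on. -/
def window (x : ℤ → A) (i : ℤ) (n : ℕ) : List A :=
  List.ofFn fun t : Fin n => x (i + (t : ℕ))

@[simp] lemma length_window (x : ℤ → A) (i : ℤ) (n : ℕ) : (window x i n).length = n := by
  simp [window]

@[simp] lemma window_zero (x : ℤ → A) (i : ℤ) : window x i 0 = [] := by simp [window]

@[simp] lemma window_one (x : ℤ → A) (i : ℤ) : window x i 1 = [x i] := by simp [window]

lemma window_eq_window_iff {x y : ℤ → A} {i j : ℤ} {n : ℕ} :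
    window x i n = window y j n ↔ ∀ t < n, x (i + t) = y (j + t) := by
  rw [window, window, List.ofFn_inj, funext_iff]
  exact ⟨fun h t ht => h ⟨t, ht⟩, fun h t => h t t.2⟩

lemma window_add (x : ℤ → A) (i : ℤ) (m n : ℕ) :
    window x i (m + n) = window x i m ++ window x (i + m) n := by
  simp [window, List.ofFn_add, add_assoc]

lemma window_add_one (x : ℤ → A) (i : ℤ) (n : ℕ) :
    window x i (n + 1) = window x i n ++ [x (i + n)] := by
  rw [window_add, window_one]

lemma window_isInfix_window (x : ℤ → A) {i j : ℤ} {m n : ℕ} (hij : i ≤ j)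
    (h : j + m ≤ i + n) : window x j m <:+: window x i n := by
  obtain ⟨a, rfl⟩ := Int.exists_add_of_le hij
  obtain ⟨b, rfl⟩ := Nat.exists_eq_add_of_le (show a + m ≤ n by omega)
  rw [window_add, window_add]
  exact ⟨_, _, rfl⟩

lemma exists_eq_window_of_isInfix {x : ℤ → A} {i : ℤ} {n : ℕ} {w : List A}
    (h : w <:+: window x i n) :
    ∃ a : ℕ, a + w.length ≤ n ∧ w = window x (i + a) w.length := by
  obtain ⟨s, t, e⟩ := h
  have hl := congrArg List.length e
  simp only [List.length_append, length_window] at hl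
  rw [← hl, window_add, window_add] at e
  obtain ⟨e', -⟩ := List.append_inj e (by simp)
  exact ⟨s.length, by omega, (List.append_inj e' (by simp)).2⟩

end Window

section ShiftBy

variable {A : Type*}

/-- The bi-infinite sequence `x` read from position `k` on: the `k`-th power of the shift, for
`k` of either sign. -/
def shiftBy (k : ℤ) (x : ℤ → A) : ℤ → A := fun j => x (j + k)

lemma shiftBy_apply (k : ℤ) (x : ℤ → A) (j : ℤ) : shiftBy k x j = x (j + k) := rfl

@[simp] lemma shiftBy_zero (x : ℤ → A) : shiftBy 0 x = x := by
  funext j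
  rw [shiftBy_apply, add_zero]

@[simp] lemma shiftBy_shiftBy (k l : ℤ) (x : ℤ → A) :
    shiftBy k (shiftBy l x) = shiftBy (k + l) x := by
  funext j
  simp only [shiftBy_apply, add_assoc]

lemma iterate_shiftMap (n : ℕ) (x : ℤ → A) : shiftMap^[n] x = shiftBy n x := by
  induction n with
  | zero => simp
  | succ n ih =>
    rw [Function.iterate_succ_apply', ih, Nat.cast_succ, add_comm, ← shiftBy_shiftBy]
    rfl

lemma window_shiftBy (x : ℤ → A) (k i : ℤ) (n : ℕ) :
    window (shiftBy k x) i n = window x (i + k) n := by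
  simp only [window_eq_window_iff, shiftBy_apply, add_right_comm, implies_true]

end ShiftBy

section CutPos

variable {A B : Type*} {σ : A → List B}

/-- A substitution is nonerasing if it maps no letter to the empty word. -/
def NonErasing (σ : A → List B) : Prop := ∀ a, σ a ≠ []

lemma NonErasing.length_pos (hσ : NonErasing σ) (a : A) : 0 < (σ a).length :=
  List.length_pos_iff.2 (hσ a)

lemma NonErasing.flatMap {C : Type*} {ρ : B → List C} (hρ : NonErasing ρ) (hσ : NonErasing σ) :
    NonErasing fun a => (σ a).flatMap ρ := by
  intro a
  obtain ⟨b, w, h⟩ := List.exists_cons_of_ne_nil (hσ a)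
  simp [h, hρ b]

/-- The positions at which the blocks `σ (x i)` start in the image of `x` under `σ`, the block
of `x 0` starting at the origin. -/
def cutPos (σ : A → List B) (x : ℤ → A) : ℤ → ℤ
  | Int.ofNat n => ∑ t ∈ Finset.range n, ((σ (x t)).length : ℤ)
  | Int.negSucc n => -∑ t ∈ Finset.range (n + 1), ((σ (x (-(t : ℤ) - 1))).length : ℤ)

@[simp] lemma cutPos_zero (σ : A → List B) (x : ℤ → A) : cutPos σ x 0 = 0 :=
  Finset.sum_range_zero _

lemma cutPos_add_one (σ : A → List B) (x : ℤ → A) (i : ℤ) :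
    cutPos σ x (i + 1) = cutPos σ x i + (σ (x i)).length := by
  rcases i with n | n
  · exact Finset.sum_range_succ _ n
  · rcases n with _ | n
    · simp [Int.negSucc_eq, cutPos]
    · change cutPos σ x (Int.negSucc n) = _
      simp only [cutPos]
      rw [Finset.sum_range_succ _ (n + 1),
        show (-((n + 1 : ℕ) : ℤ) - 1) = Int.negSucc (n + 1) by omega]
      ring

lemma cutPos_one (σ : A → List B) (x : ℤ → A) : cutPos σ x 1 = (σ (x 0)).length := by
  simpa using cutPos_add_one σ x 0

lemma eq_act_cutPos {Z : Type*} {φ : ℤ → Z → Z} {f : ℤ → Z} {x : ℤ → A} (h0 : ∀ z, φ 0 z = z)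
    (hadd : ∀ k l z, φ k (φ l z) = φ (k + l) z)
    (hf : ∀ i, f (i + 1) = φ (σ (x i)).length (f i)) (i : ℤ) :
    f i = φ (cutPos σ x i) (f 0) := by
  induction i with
  | zero => rw [cutPos_zero, h0]
  | succ n ih => rw [hf, ih, hadd, cutPos_add_one, add_comm]
  | pred n ih =>
    have h := congrArg (φ (-(σ (x (-(n : ℤ) - 1))).length)) (hf (-(n : ℤ) - 1))
    have hcut := cutPos_add_one σ x (-(n : ℤ) - 1)
    rw [sub_add_cancel] at h hcut
    rw [ih, hadd, hadd, neg_add_cancel, h0] at h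
    rw [← h, hcut, neg_add_eq_sub, add_sub_cancel_right]

lemma eq_cutPos {x : ℤ → A} {P : ℤ → ℤ} (h0 : P 0 = 0)
    (hP : ∀ i, P (i + 1) = P i + (σ (x i)).length) : P = cutPos σ x := by
  funext i
  rw [eq_act_cutPos (φ := fun k l => l + k) add_zero (fun k l z => by ring) hP i, h0, zero_add]

lemma cutPos_shiftBy (σ : A → List B) (x : ℤ → A) (s i : ℤ) :
    cutPos σ (shiftBy s x) i = cutPos σ x (i + s) - cutPos σ x s := by
  have h := eq_cutPos (σ := σ) (x := shiftBy s x)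
    (P := fun i => cutPos σ x (i + s) - cutPos σ x s) (by simp) fun i => by
      rw [add_right_comm, cutPos_add_one, shiftBy_apply, add_sub_right_comm]
  exact (congrFun h i).symm

lemma cutPos_add_natCast (σ : A → List B) (x : ℤ → A) (i : ℤ) (n : ℕ) :
    cutPos σ x (i + n) = cutPos σ x i + ((window x i n).flatMap σ).length := by
  induction n with
  | zero => simp
  | succ n ih =>
    rw [window_add_one, List.flatMap_append, List.length_append, Nat.cast_succ, ← add_assoc,
      cutPos_add_one, ih]
    simp [add_assoc]

lemma cutPos_congr {x y : ℤ → A} {a b i : ℤ} (ha : a ≤ 0) (hb : 0 ≤ b)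
    (h : Set.EqOn x y (Set.Ico a b)) (hi : i ∈ Set.Icc a b) : cutPos σ x i = cutPos σ y i := by
  obtain ⟨hai, hib⟩ := hi
  rcases le_total 0 i with h0 | h0
  · induction i, h0 using Int.leInduction with
    | base => simp
    | succ k _ ih =>
      rw [cutPos_add_one, cutPos_add_one, ih (by omega) (by omega), h ⟨by omega, by omega⟩]
  · induction i, h0 using Int.leInductionDown with
    | base => simp
    | pred k _ ih =>
      have hk := ih (by omega) (by omega)
      rw [← sub_add_cancel k 1, cutPos_add_one, cutPos_add_one,
        h (show k - 1 ∈ Set.Ico a b from ⟨by omega, by omega⟩)] at hk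
      exact add_right_cancel hk

namespace NonErasing

lemma strictMono_cutPos (hσ : NonErasing σ) (x : ℤ → A) : StrictMono (cutPos σ x) :=
  strictMono_int_of_lt_succ fun i => by
    have := hσ.length_pos (x i)
    rw [cutPos_add_one]
    omega

lemma sub_le_cutPos_sub (hσ : NonErasing σ) (x : ℤ → A) {i j : ℤ} (h : i ≤ j) :
    j - i ≤ cutPos σ x j - cutPos σ x i := by
  induction j, h using Int.leInduction with
  | base => simp
  | succ k _ ih =>
    have := hσ.strictMono_cutPos x (lt_add_one k)
    omega

lemma exists_cutPos_le_lt (hσ : NonErasing σ) (x : ℤ → A) (k : ℤ) :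
    ∃ i, cutPos σ x i ≤ k ∧ k < cutPos σ x (i + 1) := by
  have h0 := cutPos_zero σ x
  obtain ⟨i, hi, hmax⟩ := Int.exists_greatest_of_bdd (P := fun i => cutPos σ x i ≤ k)
    ⟨max k 0, fun z hz => by
      by_contra! h
      have := hσ.sub_le_cutPos_sub x (i := 0) (j := z) (by omega)
      omega⟩
    ⟨min k 0, by
      have := hσ.sub_le_cutPos_sub x (i := min k 0) (j := 0) (by omega)
      omega⟩
  refine ⟨i, hi, ?_⟩
  by_contra! h
  have := hmax _ h
  omega

lemma eq_of_cutPos_le_lt (hσ : NonErasing σ) {x : ℤ → A} {k i j : ℤ}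
    (hi : cutPos σ x i ≤ k) (hi' : k < cutPos σ x (i + 1))
    (hj : cutPos σ x j ≤ k) (hj' : k < cutPos σ x (j + 1)) : i = j := by
  have h₁ := (hσ.strictMono_cutPos x).lt_iff_lt.1 (hi.trans_lt hj')
  have h₂ := (hσ.strictMono_cutPos x).lt_iff_lt.1 (hj.trans_lt hi')
  omega

end NonErasing

end CutPos

section SubstImage

variable {A B : Type*} [Nonempty B] {σ : A → List B}

/-- The image of a bi-infinite sequence under a substitution, with the block of the letter at
the origin starting at the origin. It is characterized by `eq_substImage`, and is a junk value
if `σ` erases letters of `x`. -/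
noncomputable def substImage (σ : A → List B) (x : ℤ → A) : ℤ → B :=
  Classical.epsilon fun y => ∀ i, window y (cutPos σ x i) (σ (x i)).length = σ (x i)

namespace NonErasing

lemma window_substImage (hσ : NonErasing σ) (x : ℤ → A) (i : ℤ) :
    window (substImage σ x) (cutPos σ x i) (σ (x i)).length = σ (x i) := by
  suffices h : ∃ y : ℤ → B, ∀ i, window y (cutPos σ x i) (σ (x i)).length = σ (x i) from
    Classical.epsilon_spec h i
  choose b hb hb' using hσ.exists_cutPos_le_lt x
  have hlt (k : ℤ) : (k - cutPos σ x (b k)).toNat < (σ (x (b k))).length := by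
    have := hb k
    have := cutPos_add_one σ x (b k) ▸ hb' k
    omega
  refine ⟨fun k => (σ (x (b k)))[(k - cutPos σ x (b k)).toNat]'(hlt k), fun i => ?_⟩
  apply List.ext_getElem (length_window _ _ _)
  intro t _ ht
  have e : b (cutPos σ x i + t) = i :=
    hσ.eq_of_cutPos_le_lt (hb _) (hb' _) (by omega) (by rw [cutPos_add_one]; omega)
  simp only [window, List.getElem_ofFn, e, add_sub_cancel_left, Int.toNat_natCast]

lemma eq_substImage (hσ : NonErasing σ) {x : ℤ → A} {y : ℤ → B}
    (h : ∀ i, window y (cutPos σ x i) (σ (x i)).length = σ (x i)) : y = substImage σ x := by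
  funext k
  obtain ⟨i, hi, hi'⟩ := hσ.exists_cutPos_le_lt x k
  obtain ⟨t, rfl⟩ := Int.exists_add_of_le hi
  rw [cutPos_add_one] at hi'
  exact window_eq_window_iff.1 ((h i).trans (hσ.window_substImage x i).symm) t (by omega)

lemma substImage_shiftBy (hσ : NonErasing σ) (x : ℤ → A) (s : ℤ) :
    substImage σ (shiftBy s x) = shiftBy (cutPos σ x s) (substImage σ x) := by
  refine (hσ.eq_substImage fun i => ?_).symm
  rw [cutPos_shiftBy, shiftBy_apply, window_shiftBy, sub_add_cancel, hσ.window_substImage]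

lemma window_substImage_flatMap (hσ : NonErasing σ) (x : ℤ → A) (i : ℤ) (n : ℕ) :
    window (substImage σ x) (cutPos σ x i) ((window x i n).flatMap σ).length =
      (window x i n).flatMap σ := by
  induction n with
  | zero => simp
  | succ n ih =>
    rw [window_add_one, List.flatMap_append, List.length_append, window_add, ih,
      ← cutPos_add_natCast]
    simp [hσ.window_substImage]

lemma cutPos_flatMap {C : Type*} (ρ : B → List C) (hσ : NonErasing σ) (x : ℤ → A) (i : ℤ) :
    cutPos (fun a => (σ a).flatMap ρ) x i = cutPos ρ (substImage σ x) (cutPos σ x i) := by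
  have h := eq_cutPos (σ := fun a => (σ a).flatMap ρ) (x := x)
    (P := fun i => cutPos ρ (substImage σ x) (cutPos σ x i)) (by simp) fun i => by
      rw [cutPos_add_one, cutPos_add_natCast, hσ.window_substImage]
  exact (congrFun h i).symm

lemma substImage_flatMap {C : Type*} [Nonempty C] {ρ : B → List C} (hρ : NonErasing ρ)
    (hσ : NonErasing σ) (x : ℤ → A) :
    substImage (fun a => (σ a).flatMap ρ) x = substImage ρ (substImage σ x) := by
  refine ((hρ.flatMap hσ).eq_substImage fun i => ?_).symm
  have h := hρ.window_substImage_flatMap (substImage σ x) (cutPos σ x i) (σ (x i)).length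
  rwa [hσ.window_substImage, ← hσ.cutPos_flatMap] at h

lemma substImage_congr (hσ : NonErasing σ) {x y : ℤ → A} {a b : ℤ} (ha : a ≤ 0) (hb : 0 ≤ b)
    (h : Set.EqOn x y (Set.Ico a b)) :
    Set.EqOn (substImage σ x) (substImage σ y) (Set.Ico (cutPos σ x a) (cutPos σ x b)) := by
  rintro k ⟨hak, hkb⟩
  obtain ⟨i, hi, hi'⟩ := hσ.exists_cutPos_le_lt x k
  have hai := (hσ.strictMono_cutPos x).lt_iff_lt.1 (hak.trans_lt hi')
  have hib := (hσ.strictMono_cutPos x).lt_iff_lt.1 (hi.trans_lt hkb)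
  have hy := hσ.window_substImage y i
  rw [← h ⟨by omega, hib⟩, ← cutPos_congr ha hb h ⟨by omega, hib.le⟩] at hy
  obtain ⟨t, rfl⟩ := Int.exists_add_of_le hi
  rw [cutPos_add_one] at hi'
  exact window_eq_window_iff.1 ((hσ.window_substImage x i).trans hy.symm) t (by omega)

end NonErasing

end SubstImage

section SubstIter

variable {A : Type*} {θ : A → List A}

lemma iterate_flatMap (θ : A → List A) (k : ℕ) (w : List A) :
    (fun w : List A => w.flatMap θ)^[k] w = w.flatMap (substIter θ k) := by
  induction k generalizing w with
  | zero => exact (List.flatMap_singleton' w).symm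
  | succ k ih =>
    rw [Function.iterate_succ_apply', ih, List.flatMap_assoc]
    congr 1
    funext a
    simp only [substIter, Function.iterate_succ_apply']

lemma substIter_add (θ : A → List A) (k n : ℕ) (a : A) :
    substIter θ (k + n) a = (substIter θ n a).flatMap (substIter θ k) := by
  rw [substIter, Function.iterate_add_apply, iterate_flatMap]
  rfl

@[simp] lemma substIter_one (θ : A → List A) (a : A) : substIter θ 1 a = θ a := by
  simp [substIter]

lemma substIter_isInfix_substIter {k n : ℕ} {a b : A} (h : b ∈ substIter θ n a) :
    substIter θ k b <:+: substIter θ (k + n) a := by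
  rw [substIter_add]
  simpa using ((List.singleton_infix_iff _ _).2 h).flatMap (substIter θ k)

namespace NonErasing

lemma iter (hθ : NonErasing θ) (n : ℕ) : NonErasing (substIter θ n) := by
  induction n with
  | zero => exact fun a => List.cons_ne_nil a []
  | succ n ih =>
    intro a
    rw [add_comm, substIter_add, show substIter θ 1 = θ from funext (substIter_one θ)]
    exact hθ.flatMap ih a

variable [Nonempty A]

lemma substImage_substIter_add (hθ : NonErasing θ) (k n : ℕ) (x : ℤ → A) :
    substImage (substIter θ (k + n)) x =
      substImage (substIter θ k) (substImage (substIter θ n) x) := by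
  rw [← (hθ.iter k).substImage_flatMap (hθ.iter n), ← funext (substIter_add θ k n)]

lemma cutPos_substIter_add (hθ : NonErasing θ) (k n : ℕ) (x : ℤ → A) (i : ℤ) :
    cutPos (substIter θ (k + n)) x i =
      cutPos (substIter θ k) (substImage (substIter θ n) x) (cutPos (substIter θ n) x i) := by
  rw [← (hθ.iter n).cutPos_flatMap, ← funext (substIter_add θ k n)]

end NonErasing

end SubstIter

section Subshift

variable {A : Type*} {θ : A → List A}

lemma mem_substShift_iff {x : ℤ → A} :
    x ∈ substShift θ ↔ ∀ (i : ℤ) (n : ℕ), ∃ k a, window x i n <:+: substIter θ k a := Iff.rfl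

lemma shiftBy_mem_substShift {x : ℤ → A} (hx : x ∈ substShift θ) (k : ℤ) :
    shiftBy k x ∈ substShift θ := by
  simp only [mem_substShift_iff, window_shiftBy] at hx ⊢
  exact fun i => hx (i + k)

lemma NonErasing.exists_window_isInfix_flatMap {B : Type*} [Nonempty B] {σ : A → List B}
    (hσ : NonErasing σ) (x : ℤ → A) (i : ℤ) (n : ℕ) :
    ∃ j m, window (substImage σ x) i n <:+: (window x j m).flatMap σ := by
  obtain ⟨s, hs, -⟩ := hσ.exists_cutPos_le_lt x i
  obtain ⟨t, -, ht⟩ := hσ.exists_cutPos_le_lt x (i + n)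
  have hst := (hσ.strictMono_cutPos x).lt_iff_lt.1
    (hs.trans_lt ((by omega : i ≤ i + n).trans_lt ht))
  obtain ⟨m, hm⟩ := Int.exists_add_of_le hst.le
  refine ⟨s, m, ?_⟩
  have h := cutPos_add_natCast σ x s m
  rw [← hσ.window_substImage_flatMap x s m]
  exact window_isInfix_window _ hs (by rw [← h, ← hm]; exact ht.le)

lemma NonErasing.substImage_mem_substShift [Nonempty A] (hθ : NonErasing θ) {x : ℤ → A}
    (hx : x ∈ substShift θ) (m : ℕ) : substImage (substIter θ m) x ∈ substShift θ := by
  rw [mem_substShift_iff]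
  intro i n
  obtain ⟨j, b, hjb⟩ := (hθ.iter m).exists_window_isInfix_flatMap x i n
  obtain ⟨k, a, hk⟩ := mem_substShift_iff.1 hx j b
  exact ⟨m + k, a, substIter_add θ m k a ▸ hjb.trans (hk.flatMap _)⟩

end Subshift

section Agree

variable {A : Type*}

/-- The bi-infinite sequences `x` and `y` agree on `[-K, K]`. -/
def Agree (K : ℕ) (x y : ℤ → A) : Prop := Set.EqOn x y (Set.Icc (-K) K)

lemma Agree.symm {K : ℕ} {x y : ℤ → A} (h : Agree K x y) : Agree K y x := Set.EqOn.symm h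

lemma Agree.trans {K : ℕ} {x y z : ℤ → A} (h : Agree K x y) (h' : Agree K y z) : Agree K x z :=
  Set.EqOn.trans h h'

lemma Agree.mono {K L : ℕ} (hKL : L ≤ K) {x y : ℤ → A} (h : Agree K x y) : Agree L x y :=
  Set.EqOn.mono (Set.Icc_subset_Icc (by omega) (by omega)) h

lemma Agree.eqOn_Ico {K : ℕ} {x y : ℤ → A} (h : Agree K x y) {a b : ℤ} (ha : -K ≤ a)
    (hb : b ≤ K + 1) : Set.EqOn x y (Set.Ico a b) := fun _ ⟨hi, hi'⟩ => h ⟨by omega, by omega⟩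

lemma Agree.window_eq {K : ℕ} {x y : ℤ → A} (h : Agree K x y) {i : ℤ} {n : ℕ}
    (hi : -K ≤ i) (hn : i + n ≤ K + 1) : window x i n = window y i n :=
  window_eq_window_iff.2 fun _ _ => h ⟨by omega, by omega⟩

variable [TopologicalSpace A]

lemma continuous_shiftBy (k : ℤ) : Continuous (shiftBy k : (ℤ → A) → ℤ → A) :=
  continuous_pi fun j => continuous_apply (j + k)

variable [DiscreteTopology A]

lemma hasBasis_nhds_agree (x : ℤ → A) :
    (𝓝 x).HasBasis (fun _ : ℕ => True) fun K => {y | Agree K y x} := by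
  refine ⟨fun t => ⟨fun ht => ?_, ?_⟩⟩
  · obtain ⟨u, hut, hu, hxu⟩ := mem_nhds_iff.1 ht
    obtain ⟨I, v, hv, hIv⟩ := isOpen_pi_iff.1 hu x hxu
    refine ⟨I.sup Int.natAbs, trivial, fun y hy => hut (hIv fun i hi => ?_)⟩
    have := Finset.le_sup (f := Int.natAbs) hi
    rw [hy (show i ∈ Set.Icc _ _ from ⟨by omega, by omega⟩)]
    exact (hv i hi).2
  · rintro ⟨K, -, hK⟩
    refine mem_of_superset (set_pi_mem_nhds (Set.finite_Icc (-(K : ℤ)) K) fun i _ =>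
      (isOpen_discrete {x i}).mem_nhds rfl) fun y hy => hK fun i hi => hy i hi

lemma mem_closure_iff_agree {s : Set (ℤ → A)} {x : ℤ → A} :
    x ∈ closure s ↔ ∀ K, ∃ y ∈ s, Agree K y x := by
  simp [mem_closure_iff_nhds_basis (hasBasis_nhds_agree x)]

lemma continuous_of_agree {B : Type*} [TopologicalSpace B] {f : (ℤ → A) → B}
    (h : ∀ x, ∃ K, ∀ y, Agree K y x → f y = f x) : Continuous f := by
  refine continuous_iff_continuousAt.2 fun x => ?_
  obtain ⟨K, hK⟩ := h x
  exact (continuousAt_const (y := f x)).congr <|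
    ((hasBasis_nhds_agree x).eventually_iff).2 ⟨K, trivial, fun y hy => (hK y hy).symm⟩

lemma exists_agree_of_continuous {X : Set (ℤ → A)} [CompactSpace X] {D : Type*}
    [TopologicalSpace D] [DiscreteTopology D] {f : X → D} (hf : Continuous f) :
    ∃ K : ℕ, ∀ x y : X, Agree K x.1 y.1 → f x = f y := by
  by_contra! h
  choose u v huv hne using h
  obtain ⟨x, φ, hφ, hu⟩ := CompactSpace.tendsto_subseq u
  have hfx : f ⁻¹' {f x} ∈ 𝓝 x := hf.continuousAt ((isOpen_discrete {f x}).mem_nhds rfl)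
  rw [nhds_subtype, ((hasBasis_nhds_agree x.1).comap Subtype.val).mem_iff] at hfx
  obtain ⟨K, -, hK⟩ := hfx
  have hux : ∀ᶠ n in atTop, Agree K (u (φ n)).1 x.1 :=
    (continuous_subtype_val.tendsto x |>.comp hu).eventually
      ((hasBasis_nhds_agree x.1).mem_of_mem (i := K) trivial)
  obtain ⟨n, hn, hKn⟩ := (hux.and (eventually_ge_atTop K)).exists
  have hv := ((huv (φ n)).mono (hKn.trans (hφ.id_le n))).symm.trans hn
  exact hne _ ((hK hn : f _ = f x).trans (hK hv : f _ = f x).symm)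

lemma isClosed_substShift (θ : A → List A) : IsClosed (substShift θ) := by
  refine isClosed_of_closure_subset fun x hx => ?_
  rw [mem_substShift_iff]
  intro i n
  obtain ⟨y, hy, hyx⟩ := mem_closure_iff_agree.1 hx (i.natAbs + n)
  rw [← hyx.window_eq (by omega) (by omega)]
  exact hy i n

lemma isCompact_substShift [Finite A] (θ : A → List A) : IsCompact (substShift θ) :=
  (isClosed_substShift θ).isCompact

instance compactSpace_substShift [Finite A] (θ : A → List A) : CompactSpace (substShift θ) :=
  isCompact_iff_compactSpace.1 (isCompact_substShift θ)

lemma NonErasing.continuous_substImage {B : Type*} [Nonempty B] [TopologicalSpace B]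
    {σ : A → List B} (hσ : NonErasing σ) : Continuous (substImage σ) := by
  refine continuous_pi fun k => continuous_of_agree fun x => ⟨k.natAbs + 1, fun y hy => ?_⟩
  have h₁ := hσ.sub_le_cutPos_sub x (i := -(k.natAbs : ℤ)) (j := 0) (by omega)
  have h₂ := hσ.sub_le_cutPos_sub x (i := 0) (j := (k.natAbs : ℤ) + 1) (by omega)
  rw [cutPos_zero] at h₁ h₂
  have hxy := hy.symm.eqOn_Ico (a := -k.natAbs) (b := k.natAbs + 1) (by omega) (by omega)
  exact (hσ.substImage_congr (by omega) (by omega) hxy ⟨by omega, by omega⟩).symm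

end Agree

section CenteredRepr

variable {A B : Type*} [Nonempty B] {σ : A → List B}

/-- A centered `σ`-representation `(z, s)` of `y`: the sequence `y` is the image of `z` under `σ`
read from the position `s` of the block of `z 0`. -/
structure IsCenteredRepr (σ : A → List B) (z : ℤ → A) (s : ℤ) (y : ℤ → B) : Prop where
  nonneg : 0 ≤ s
  lt_length : s < (σ (z 0)).length
  eq_shiftBy : y = shiftBy s (substImage σ z)

lemma NonErasing.exists_isCenteredRepr (hσ : NonErasing σ) (z : ℤ → A) (s : ℤ) :
    ∃ i, IsCenteredRepr σ (shiftBy i z) (s - cutPos σ z i) (shiftBy s (substImage σ z)) := by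
  obtain ⟨i, hi, hi'⟩ := hσ.exists_cutPos_le_lt z s
  rw [cutPos_add_one] at hi'
  refine ⟨i, by omega, ?_, ?_⟩
  · rw [shiftBy_apply, zero_add]
    omega
  · rw [hσ.substImage_shiftBy, shiftBy_shiftBy, sub_add_cancel]

lemma NonErasing.isClosed_setOf_isCenteredRepr [Finite A] [TopologicalSpace A]
    [DiscreteTopology A] [TopologicalSpace B] [DiscreteTopology B] (hσ : NonErasing σ)
    {X : Set (ℤ → A)} (hX : IsCompact X) (I : Set ℤ) :
    IsClosed {y | ∃ z ∈ X, ∃ s ∈ I, IsCenteredRepr σ z s y} := by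
  obtain ⟨M, hM⟩ := Finite.exists_le fun a => (σ a).length
  have e : {y | ∃ z ∈ X, ∃ s ∈ I, IsCenteredRepr σ z s y} =
      ⋃ s ∈ I ∩ Set.Ico 0 (M : ℤ), (fun z => shiftBy s (substImage σ z)) ''
        (X ∩ {z | s < (σ (z 0)).length}) := by
    ext y
    simp only [Set.mem_iUnion]
    constructor
    · rintro ⟨z, hz, s, hs, h⟩
      have hlt := h.lt_length.trans_le (Nat.cast_le.2 (hM (z 0)))
      exact ⟨s, ⟨hs, h.nonneg, hlt⟩, z, ⟨hz, h.lt_length⟩, h.eq_shiftBy.symm⟩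
    · rintro ⟨s, ⟨hs, hs0, -⟩, z, ⟨hz, hlt⟩, rfl⟩
      exact ⟨z, hz, s, hs, hs0, hlt, rfl⟩
  rw [e]
  refine ((Set.finite_Ico 0 (M : ℤ)).inter_of_right I).isClosed_biUnion fun s _ => ?_
  have hcl : IsClosed ((fun z : ℤ → A => z 0) ⁻¹' {a | s < (σ a).length}) :=
    (isClosed_discrete _).preimage (continuous_apply 0)
  exact ((hX.inter_right hcl).image
    ((continuous_shiftBy s).comp hσ.continuous_substImage)).isClosed

end CenteredRepr

section ProperPrimitiveFrom

variable {A : Type*} {θ : A → List A} {d : ℕ} {l r : A}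

lemma head?_flatMap {B : Type*} {σ : A → List B} {b : B} (h : ∀ a, (σ a).head? = some b)
    {w : List A} (hw : w ≠ []) : (w.flatMap σ).head? = some b := by
  obtain ⟨a, v, rfl⟩ := List.exists_cons_of_ne_nil hw
  simp [h]

lemma getLast?_flatMap {B : Type*} {σ : A → List B} {b : B} (h : ∀ a, (σ a).getLast? = some b)
    {w : List A} (hw : w ≠ []) : (w.flatMap σ).getLast? = some b := by
  obtain ⟨v, a, rfl⟩ := List.eq_nil_or_concat' w |>.resolve_left hw
  simp [h]

section

variable {B : Type*} [Nonempty B] {σ : A → List B}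

lemma NonErasing.substImage_apply_cutPos (hσ : NonErasing σ) {x : ℤ → A} {i : ℤ} {b : B}
    (h : (σ (x i)).head? = some b) : substImage σ x (cutPos σ x i) = b := by
  obtain ⟨s, hs⟩ := Nat.exists_eq_add_one.2 (hσ.length_pos (x i))
  rw [← hσ.window_substImage, hs, add_comm, window_add] at h
  simpa using h

lemma NonErasing.substImage_apply_cutPos_sub_one (hσ : NonErasing σ) {x : ℤ → A} {i : ℤ} {b : B}
    (h : (σ (x (i - 1))).getLast? = some b) : substImage σ x (cutPos σ x i - 1) = b := by
  obtain ⟨s, hs⟩ := Nat.exists_eq_add_one.2 (hσ.length_pos (x (i - 1)))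
  have hi := cutPos_add_one σ x (i - 1)
  rw [← hσ.window_substImage, hs, window_add_one] at h
  rw [hs, sub_add_cancel] at hi
  rw [show cutPos σ x i - 1 = cutPos σ x (i - 1) + s by omega]
  simpa using h

end

/-- A quantitative form of properness and primitivity: from level `d` on, all the words `θ^n(a)`
begin with `l`, end with `r` and contain all letters, and their lengths tend to infinity. -/
structure ProperPrimitiveFrom (θ : A → List A) (d : ℕ) (l r : A) : Prop where
  nonErasing : NonErasing θ
  head : ∀ n, d ≤ n → ∀ a, (substIter θ n a).head? = some l
  last : ∀ n, d ≤ n → ∀ a, (substIter θ n a).getLast? = some r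
  mem : ∀ n, d ≤ n → ∀ a b, b ∈ substIter θ n a
  tendsto_length : ∀ a, Tendsto (fun k => (substIter θ k a).length) atTop atTop

lemma NonErasing.exists_properPrimitiveFrom [Finite A] (hθ : NonErasing θ)
    (hproper : SubstProper θ) (hprim : SubstPrimitive θ) :
    ∃ d l r, ProperPrimitiveFrom θ d l r := by
  obtain ⟨l, r, k, hk⟩ := hproper
  have head : ∀ n, k ≤ n → ∀ a, (substIter θ n a).head? = some l := by
    intro n hn a
    obtain ⟨j, rfl⟩ := Nat.exists_eq_add_of_le hn
    exact substIter_add θ k j a ▸ head?_flatMap (fun b => (hk b).1) (hθ.iter j a)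
  have last : ∀ n, k ≤ n → ∀ a, (substIter θ n a).getLast? = some r := by
    intro n hn a
    obtain ⟨j, rfl⟩ := Nat.exists_eq_add_of_le hn
    exact substIter_add θ k j a ▸ getLast?_flatMap (fun b => (hk b).2) (hθ.iter j a)
  choose j hj using hprim.1 l
  obtain ⟨J, hJ⟩ := Finite.exists_le j
  refine ⟨k + J, l, r, hθ, fun n hn => head n (by omega), fun n hn => last n (by omega),
    fun n hn a b => ?_, hprim.2⟩
  obtain ⟨i, rfl⟩ := Nat.exists_eq_add_of_le (show j b ≤ n by have := hJ b; omega)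
  have := hJ b
  exact (substIter_isInfix_substIter (List.mem_of_mem_head? (head i (by omega) a))).subset (hj b)

namespace ProperPrimitiveFrom

lemma exists_le_length [Finite A] (h : ProperPrimitiveFrom θ d l r) (K : ℕ) :
    ∃ n₀, ∀ n ≥ n₀, ∀ a, K ≤ (substIter θ n a).length :=
  eventually_atTop.1 (eventually_all.2 fun a => (h.tendsto_length a).eventually_ge_atTop K)

lemma exists_window_isInfix_substIter (h : ProperPrimitiveFrom θ d l r) {y : ℤ → A}
    (hy : y ∈ substShift θ) (i : ℤ) (n : ℕ) :
    ∃ n₀, ∀ m ≥ n₀, ∀ a, window y i n <:+: substIter θ m a := by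
  obtain ⟨k, b, hk⟩ := hy i n
  refine ⟨k + d, fun m hm a => ?_⟩
  obtain ⟨j, rfl⟩ := Nat.exists_eq_add_of_le (show k ≤ m by omega)
  exact List.IsInfix.trans hk (substIter_isInfix_substIter (h.mem j (by omega) a b))

variable [Nonempty A]

/-- Beyond the blocks of a word on which `x` and `y` agree, their images of high level still
agree on both sides by properness: there all blocks of level `n` end with `r` and begin with `l`. -/
lemma substImage_eqOn_around (h : ProperPrimitiveFrom θ d l r) {k n : ℕ} (hn : d ≤ n) {K : ℕ}
    (hK : ∀ a, K ≤ (substIter θ k a).length) {x y : ℤ → A} {s : ℤ} (hs : 0 ≤ s)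
    (hxy : Set.EqOn x y (Set.Ico 0 s)) :
    Set.EqOn (substImage (substIter θ (k + n)) x) (substImage (substIter θ (k + n)) y)
      (Set.Ico (-K) (cutPos (substIter θ (k + n)) x s + K)) := by
  have hθk := h.nonErasing.iter k
  have hθn := h.nonErasing.iter n
  set x' := substImage (substIter θ n) x with hx'
  set y' := substImage (substIter θ n) y with hy'
  set q := cutPos (substIter θ n) x s with hq
  have hqy : q = cutPos (substIter θ n) y s := cutPos_congr le_rfl hs hxy ⟨hs, le_rfl⟩
  have hq0 : 0 ≤ q := by simpa using (hθn.strictMono_cutPos x).monotone hs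
  have hleft (z : ℤ → A) : substImage (substIter θ n) z (-1) = r := by
    simpa using hθn.substImage_apply_cutPos_sub_one (i := 0) (h.last n hn (z (0 - 1)))
  have hright (z : ℤ → A) : substImage (substIter θ n) z (cutPos (substIter θ n) z s) = l :=
    hθn.substImage_apply_cutPos (h.head n hn (z s))
  have hag : Set.EqOn x' y' (Set.Ico (-1) (q + 1)) := by
    rintro j ⟨hj, hj'⟩
    rcases eq_or_lt_of_le hj with rfl | hj
    · rw [hx', hy', hleft, hleft]
    rcases eq_or_lt_of_le (Int.lt_add_one_iff.1 hj') with rfl | hj'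
    · rw [hx', hy', hq, hright, ← hq, hqy, hright]
    · exact hθn.substImage_congr le_rfl hs hxy ⟨by rw [cutPos_zero]; omega, hj'⟩
  have hstart := cutPos_add_one (substIter θ k) x' (-1)
  rw [neg_add_cancel, cutPos_zero] at hstart
  have hKleft := hK (x' (-1))
  have hKright := hK (x' q)
  rw [h.nonErasing.substImage_substIter_add, h.nonErasing.substImage_substIter_add,
    h.nonErasing.cutPos_substIter_add]
  refine (hθk.substImage_congr (by norm_num) (by omega) hag).mono (Set.Ico_subset_Ico ?_ ?_)
  · omega
  · rw [← hx', ← hq, cutPos_add_one]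
    omega

variable [Finite A] [TopologicalSpace A] [DiscreteTopology A]

lemma nonempty_substShift (h : ProperPrimitiveFrom θ d l r) : (substShift θ).Nonempty := by
  let z : ℤ → A := fun _ => l
  have hlen (N : ℕ) : ∃ n, 2 * N + 1 ≤ (substIter θ n l).length :=
    (h.exists_le_length _).imp fun n hn => hn n le_rfl l
  choose n hn using hlen
  obtain ⟨x, φ, hφ, hx⟩ := CompactSpace.tendsto_subseq
    fun N : ℕ => shiftBy (N : ℤ) (substImage (substIter θ (n N)) z)
  refine ⟨x, mem_substShift_iff.2 fun i m => ?_⟩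
  have hagree := hx.eventually
    ((hasBasis_nhds_agree x).mem_of_mem (i := i.natAbs + m) trivial)
  obtain ⟨N, hN, hNm⟩ := (hagree.and (eventually_ge_atTop (i.natAbs + m))).exists
  have hφN : N ≤ φ N := hφ.id_le N
  refine ⟨n (φ N), l, ?_⟩
  have hblock := (h.nonErasing.iter (n (φ N))).window_substImage z 0
  rw [cutPos_zero] at hblock
  rw [← hN.window_eq (by omega) (by omega), Function.comp_apply, window_shiftBy, ← hblock]
  have : 2 * φ N + 1 ≤ (substIter θ (n (φ N)) (z 0)).length := hn (φ N)
  exact window_isInfix_window _ (by omega) (by omega)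

lemma exists_isCenteredRepr (h : ProperPrimitiveFrom θ d l r) {y : ℤ → A}
    (hy : y ∈ substShift θ) (n : ℕ) :
    ∃ z ∈ substShift θ, ∃ s, IsCenteredRepr (substIter θ n) z s y := by
  have hθn := h.nonErasing.iter n
  suffices hy : y ∈ closure {y | ∃ z ∈ substShift θ, ∃ s ∈ Set.univ,
      IsCenteredRepr (substIter θ n) z s y} by
    rw [(hθn.isClosed_setOf_isCenteredRepr (isCompact_substShift θ) Set.univ).closure_eq] at hy
    simpa using hy
  refine mem_closure_iff_agree.2 fun K => ?_
  obtain ⟨x, hx⟩ := h.nonempty_substShift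
  obtain ⟨m, hm⟩ := h.exists_window_isInfix_substIter hy (-K) (2 * K + 1)
  have hinfix := hm (n + m) (by omega) (x 0)
  rw [← (h.nonErasing.iter (n + m)).window_substImage] at hinfix
  obtain ⟨u, -, hu⟩ := exists_eq_window_of_isInfix hinfix
  rw [length_window, cutPos_zero, h.nonErasing.substImage_substIter_add,
    window_eq_window_iff] at hu
  obtain ⟨i, hi⟩ := hθn.exists_isCenteredRepr (substImage (substIter θ m) x) (u + K)
  refine ⟨_, ⟨_, shiftBy_mem_substShift (h.nonErasing.substImage_mem_substShift hx m) i, _,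
    trivial, hi⟩, fun j ⟨hj, hj'⟩ => ?_⟩
  have := hu (j + K).toNat (by omega)
  rw [show -(K : ℤ) + ((j + K).toNat : ℤ) = j by omega,
    show 0 + (u : ℤ) + ((j + K).toNat : ℤ) = j + (u + K) by omega] at this
  exact this.symm

lemma exists_fixedPoint (h : ProperPrimitiveFrom θ d l r) :
    ∃ ω ∈ substShift θ, ∀ n, substImage (substIter θ n) ω = ω := by
  have hcont (n : ℕ) := (h.nonErasing.iter n).continuous_substImage
  have hadd := h.nonErasing.substImage_substIter_add
  obtain ⟨ω, hω⟩ := IsCompact.nonempty_iInter_of_sequence_nonempty_isCompact_isClosed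
    (fun n => substImage (substIter θ n) '' substShift θ)
    (fun n => by
      rintro _ ⟨x, hx, rfl⟩
      exact ⟨_, h.nonErasing.substImage_mem_substShift hx 1, (hadd n 1 x).symm⟩)
    (fun n => h.nonempty_substShift.image _)
    ((isCompact_substShift θ).image (hcont 0))
    (fun n => ((isCompact_substShift θ).image (hcont n)).isClosed)
  rw [Set.mem_iInter] at hω
  refine ⟨ω, ?_, fun n => funext fun i => ?_⟩
  · obtain ⟨x, hx, rfl⟩ := hω 0
    exact h.nonErasing.substImage_mem_substShift hx 0
  · obtain ⟨k, hk⟩ := h.exists_le_length (i.natAbs + 1)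
    obtain ⟨x, -, rfl⟩ := hω (k + d)
    rw [← hadd, add_comm n, hadd]
    have hnil (y : ℤ → A) : Set.EqOn y x (Set.Ico 0 0) := fun j hj => by simp at hj
    exact h.substImage_eqOn_around le_rfl (hk k le_rfl) le_rfl (hnil _)
      ⟨by omega, by rw [cutPos_zero]; omega⟩

end ProperPrimitiveFrom

end ProperPrimitiveFrom

section LinearRecurrence

variable {A : Type*} {θ : A → List A} {d : ℕ} {l r : A}

lemma length_flatMap_le {B : Type*} (σ : A → List B) {K : ℕ} (hK : ∀ a, (σ a).length ≤ K)
    (w : List A) : (w.flatMap σ).length ≤ w.length * K := by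
  rw [List.length_flatMap]
  simpa using List.sum_le_card_nsmul (w.map fun a => (σ a).length) K (by simp [hK])

namespace NonErasing

lemma length_le_length_flatMap {B : Type*} {σ : A → List B} (hσ : NonErasing σ) (w : List A) :
    w.length ≤ (w.flatMap σ).length := by
  rw [List.length_flatMap]
  simpa using List.length_le_sum_of_one_le (w.map fun a => (σ a).length) fun n hn => by
    obtain ⟨a, -, rfl⟩ := List.mem_map.1 hn
    exact hσ.length_pos a

lemma length_substIter_mono (hθ : NonErasing θ) {m n : ℕ} (h : m ≤ n) (a : A) :
    (substIter θ m a).length ≤ (substIter θ n a).length := by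
  obtain ⟨k, rfl⟩ := Nat.exists_eq_add_of_le' h
  exact substIter_add θ k m a ▸ (hθ.iter k).length_le_length_flatMap _

end NonErasing

lemma SubstAperiodic.exists_apply_ne (haper : SubstAperiodic θ) (hne : (substShift θ).Nonempty)
    {k : ℕ} (hk : 0 < k) : ∃ x ∈ substShift θ, x k ≠ x 0 := by
  by_contra! hperiodic
  obtain ⟨x, hx⟩ := hne
  refine haper x hx k hk ?_
  rw [iterate_shiftMap]
  funext i
  have := hperiodic _ (shiftBy_mem_substShift hx i)
  rwa [shiftBy_apply, shiftBy_apply, zero_add, add_comm] at this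

namespace ProperPrimitiveFrom

variable [Finite A]

lemma exists_forall_length_le_mul (h : ProperPrimitiveFrom θ d l r) (c : ℕ) :
    ∃ C, ∀ n, 1 ≤ n → ∃ k, (∀ a, n ≤ (substIter θ k a).length) ∧
      ∀ a, (substIter θ (k + c) a).length ≤ n * C := by
  classical
  obtain ⟨C, hC⟩ := Finite.exists_le fun a => (substIter θ (c + d + 1) a).length
  refine ⟨C, fun n hn => ?_⟩
  have hex : ∃ k, ∀ a, n ≤ (substIter θ k a).length :=
    (h.exists_le_length n).imp fun k hk => hk k le_rfl
  refine ⟨Nat.find hex, Nat.find_spec hex, fun a => ?_⟩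
  have hmin (j : ℕ) (hj : j < Nat.find hex) := Nat.find_min hex hj
  generalize Nat.find hex = k at hmin
  rcases Nat.lt_or_ge k (d + 1) with hk | hk
  · calc (substIter θ (k + c) a).length ≤ (substIter θ (c + d + 1) a).length :=
          h.nonErasing.length_substIter_mono (by omega) a
      _ ≤ C := hC a
      _ ≤ n * C := Nat.le_mul_of_pos_left _ hn
  · obtain ⟨j, rfl⟩ := Nat.exists_eq_add_of_le' hk
    have hshort := hmin (j + d) (by omega)
    push Not at hshort
    obtain ⟨b, hb⟩ := hshort
    have hj : (substIter θ j a).length ≤ n :=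
      (substIter_isInfix_substIter (h.mem d le_rfl b a)).length_le.trans hb.le
    rw [show j + (d + 1) + c = c + d + 1 + j by omega, substIter_add]
    exact (length_flatMap_le _ hC _).trans (Nat.mul_le_mul_right _ hj)

lemma exists_forall_window_isInfix_substIter (h : ProperPrimitiveFrom θ d l r) (n : ℕ) :
    ∃ m, ∀ y ∈ substShift θ, ∀ a, window y 0 n <:+: substIter θ m a := by
  have hword (f : Fin n → A) : ∃ m₀, ∀ m ≥ m₀, ∀ y ∈ substShift θ, List.ofFn f = window y 0 n →
      ∀ a, window y 0 n <:+: substIter θ m a := by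
    by_cases hf : ∃ y ∈ substShift θ, List.ofFn f = window y 0 n
    · obtain ⟨y, hy, e⟩ := hf
      obtain ⟨m₀, hm₀⟩ := h.exists_window_isInfix_substIter hy 0 n
      exact ⟨m₀, fun m hm y' _ e' => e' ▸ e ▸ hm₀ m hm⟩
    · exact ⟨0, fun m _ y hy e => absurd ⟨y, hy, e⟩ hf⟩
  choose m₀ hm₀ using hword
  obtain ⟨m, hm⟩ := Finite.exists_le m₀
  exact ⟨m, fun y hy => hm₀ _ m (hm _) y hy rfl⟩

variable [Nonempty A] [TopologicalSpace A] [DiscreteTopology A]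

/-- Linear recurrence. A word of length `n` is covered by the images of two consecutive letters
at the first level whose images all have length at least `n`; the lengths at this level are
comparable to `n`, and all two-letter words occur boundedly many levels higher. -/
lemma exists_linearRecurrence (h : ProperPrimitiveFrom θ d l r) :
    ∃ C : ℕ, ∀ n, 1 ≤ n → ∀ N a, n * C < (substIter θ N a).length →
      ∀ x ∈ substShift θ, window x 0 n <:+: substIter θ N a := by
  obtain ⟨c, hc⟩ := h.exists_forall_window_isInfix_substIter 2
  obtain ⟨C, hC⟩ := h.exists_forall_length_le_mul c
  refine ⟨C, fun n hn N a hN x hx => ?_⟩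
  obtain ⟨k, hk, hk'⟩ := hC n hn
  have hθk := h.nonErasing.iter k
  have hkN : k + c ≤ N := by
    by_contra! hlt
    exact (hN.trans_le (h.nonErasing.length_substIter_mono hlt.le a)).not_ge (hk' a)
  obtain ⟨j, rfl⟩ := Nat.exists_eq_add_of_le hkN
  obtain ⟨y, hy, s, hs⟩ := h.exists_isCenteredRepr hx k
  obtain ⟨b, hb⟩ := List.exists_mem_of_ne_nil _ (h.nonErasing.iter j a)
  have hcover : s + n ≤ ((window y 0 2).flatMap (substIter θ k)).length := by
    have := hk (y 1)
    have := hs.lt_length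
    simp only [show 2 = 1 + 1 from rfl, window_add_one, List.flatMap_append, List.length_append]
    simp
    omega
  have hpair := hθk.window_substImage_flatMap y 0 2
  calc window x 0 n = window (substImage (substIter θ k) y) s n := by
        rw [hs.eq_shiftBy, window_shiftBy, zero_add]
    _ <:+: (window y 0 2).flatMap (substIter θ k) := by
        rw [← hpair, cutPos_zero]
        exact window_isInfix_window _ hs.nonneg (by omega)
    _ <:+: substIter θ (k + c) b := substIter_add θ k c b ▸ (hc y hy b).flatMap _
    _ <:+: substIter θ (k + c + j) a := substIter_isInfix_substIter hb

lemma exists_length_le_mul_sub (h : ProperPrimitiveFrom θ d l r) (haper : SubstAperiodic θ) :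
    ∃ C : ℕ, 0 < C ∧ ∀ N (z z' : ℤ → A) (t t' : ℤ), z 0 = z' 0 → t < t' →
      shiftBy t (substImage (substIter θ N) z) = shiftBy t' (substImage (substIter θ N) z') →
        ((substIter θ N (z 0)).length : ℤ) ≤ C * (t' - t) := by
  obtain ⟨C, hC⟩ := h.exists_linearRecurrence
  refine ⟨2 * C + 1, by omega, fun N z z' t t' hz ht heq => ?_⟩
  by_contra! hlt
  obtain ⟨e, rfl⟩ := Int.exists_add_of_le ht.le
  rw [add_sub_cancel_left] at hlt
  have hθN := h.nonErasing.iter N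
  obtain ⟨x, hx, hxe⟩ := haper.exists_apply_ne h.nonempty_substShift (k := e) (by omega)
  have hlong : (e + 1) * C < (substIter θ N (z 0)).length := by
    have he : 1 ≤ e := by omega
    zify at he ⊢
    push_cast at hlt
    nlinarith
  have hinfix := hC (e + 1) (by omega) N (z 0) hlong x hx
  rw [← hθN.window_substImage, cutPos_zero] at hinfix
  obtain ⟨o, ho, hw⟩ := exists_eq_window_of_isInfix hinfix
  rw [length_window] at ho hw
  rw [window_eq_window_iff] at hw
  have h0 := hw 0 (by omega)
  have he := hw e (by omega)
  simp only [zero_add, Nat.cast_zero, add_zero] at h0 he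
  have hzz' : Set.EqOn z z' (Set.Ico 0 1) := fun i ⟨hi, hi'⟩ => by
    rwa [show i = 0 by omega]
  have hblock := hθN.substImage_congr le_rfl zero_le_one hzz'
    (show (o + e : ℤ) ∈ _ from ⟨by rw [cutPos_zero]; omega, by rw [cutPos_one]; omega⟩)
  have hshift := congrFun heq (o - t)
  rw [shiftBy_apply, shiftBy_apply, sub_add_cancel, show (o : ℤ) - t + (t + e) = o + e by ring,
    ← hblock] at hshift
  exact hxe (by rw [h0, he, hshift])

end ProperPrimitiveFrom

end LinearRecurrence

section Recognizability

variable {A : Type*} {θ : A → List A} {d : ℕ} {l r : A}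

/-- Cut `[0, len a)` into `C` intervals of equal length and use the pigeonhole principle. -/
lemma exists_ne_mul_sub_lt {ι : Type*} [Fintype ι] [Fintype A] {C : ℕ} (hC : 0 < C)
    (hcard : Fintype.card A * C < Fintype.card ι) {len : A → ℤ} {a : ι → A} {t : ι → ℤ}
    (ht : ∀ j, 0 ≤ t j) (ht' : ∀ j, t j < len (a j)) :
    ∃ j j', j ≠ j' ∧ a j = a j' ∧ t j ≤ t j' ∧ C * (t j' - t j) < len (a j) := by
  have hlen (j : ι) : 0 < len (a j) := (ht j).trans_lt (ht' j)
  have hslot (j : ι) : 0 ≤ C * t j / len (a j) ∧ C * t j / len (a j) < C := by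
    refine ⟨Int.ediv_nonneg (mul_nonneg (by omega) (ht j)) (hlen j).le, ?_⟩
    rw [Int.ediv_lt_iff_lt_mul (hlen j)]
    exact mul_lt_mul_of_pos_left (ht' j) (by omega)
  let slot : ι → A × Fin C := fun j =>
    (a j, ⟨(C * t j / len (a j)).toNat, by have := hslot j; omega⟩)
  obtain ⟨j, j', hne, heq⟩ := Fintype.exists_ne_map_eq_of_card_lt slot (by simpa using hcard)
  wlog hle : t j ≤ t j' generalizing j j'
  · exact this j' j hne.symm heq.symm (le_of_not_ge hle)
  have ha : a j = a j' := congrArg Prod.fst heq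
  have hdiv : (C * t j / len (a j)).toNat = (C * t j' / len (a j')).toNat :=
    congrArg (fun b => (b.2 : ℕ)) heq
  refine ⟨j, j', hne, ha, hle, ?_⟩
  have hj := hslot j
  have hj' := hslot j'
  rw [← ha] at hdiv hj'
  have hdiv' : C * t j / len (a j) = C * t j' / len (a j) := by omega
  have hlt := Int.lt_ediv_add_one_mul_self (C * t j') (hlen j)
  have hle := Int.ediv_mul_le (C * t j) (hlen j).ne'
  rw [hdiv'] at hle
  linarith

variable [Nonempty A]

lemma IsCenteredRepr.comp (hθ : NonErasing θ) {k m : ℕ} {y z w : ℤ → A} {s t : ℤ}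
    (h : IsCenteredRepr (substIter θ k) z s y) (h' : IsCenteredRepr (substIter θ m) w t z) :
    IsCenteredRepr (substIter θ (k + m)) w
      (cutPos (substIter θ k) (substImage (substIter θ m) w) t + s) y := by
  obtain ⟨hs, hlt, rfl⟩ := h
  obtain ⟨ht, hlt', rfl⟩ := h'
  have hmono := (hθ.iter k).strictMono_cutPos (substImage (substIter θ m) w)
  refine ⟨add_nonneg ?_ hs, ?_, ?_⟩
  · simpa using hmono.monotone ht
  · rw [← cutPos_one, hθ.cutPos_substIter_add, cutPos_one]
    refine lt_of_lt_of_le ?_ (hmono.monotone hlt')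
    rw [cutPos_add_one]
    rw [shiftBy_apply, zero_add] at hlt
    omega
  · rw [hθ.substImage_substIter_add, (hθ.iter k).substImage_shiftBy, shiftBy_shiftBy, add_comm]

/-- `t` is a boundary between two blocks of level `k` in the image of `z` under `θ^N`, where
`k ≤ N`. -/
def IsCut (θ : A → List A) (k N : ℕ) (z : ℤ → A) (t : ℤ) : Prop :=
  ∃ v, t = cutPos (substIter θ k) (substImage (substIter θ (N - k)) z) v

lemma IsCut.mono (hθ : NonErasing θ) {k k' N : ℕ} {z : ℤ → A} {t : ℤ} (hk : k ≤ k') (hN : k' ≤ N)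
    (h : IsCut θ k' N z t) : IsCut θ k N z t := by
  obtain ⟨j, rfl⟩ := Nat.exists_eq_add_of_le hk
  obtain ⟨i, rfl⟩ := Nat.exists_eq_add_of_le hN
  obtain ⟨v, rfl⟩ := h
  rw [hθ.cutPos_substIter_add, ← hθ.substImage_substIter_add]
  exact ⟨_, by rw [show k + j + i - k = j + (k + j + i - (k + j)) by omega]⟩

lemma IsCut.congr (hθ : NonErasing θ) {k N : ℕ} (hk : k ≤ N) {z z' : ℤ → A} {t : ℤ}
    (hz : z 0 = z' 0) (ht : 0 ≤ t) (ht' : t < (substIter θ N (z 0)).length)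
    (h : IsCut θ k N z t) : IsCut θ k N z' t := by
  obtain ⟨i, rfl⟩ := Nat.exists_eq_add_of_le hk
  obtain ⟨v, rfl⟩ := h
  rw [IsCut]
  rw [Nat.add_sub_cancel_left] at ht ht' ⊢
  have hzz' : Set.EqOn z z' (Set.Ico 0 1) := fun j ⟨hj, hj'⟩ => by rwa [show j = 0 by omega]
  have hmono := (hθ.iter k).strictMono_cutPos (substImage (substIter θ i) z)
  rw [← cutPos_one, hθ.cutPos_substIter_add, hmono.lt_iff_lt] at ht'
  rw [← cutPos_zero (substIter θ k) (substImage (substIter θ i) z), hmono.le_iff_le] at ht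
  have himage := (hθ.iter i).substImage_congr le_rfl zero_le_one hzz'
  rw [cutPos_zero] at himage
  exact ⟨v, cutPos_congr le_rfl (ht.trans ht'.le) himage ⟨ht, ht'.le⟩⟩

namespace ProperPrimitiveFrom

variable [Finite A] [TopologicalSpace A] [DiscreteTopology A]

lemma exists_isCut_not_isCut (h : ProperPrimitiveFrom θ d l r) {ω : ℤ → A}
    (hω : ∀ n, substImage (substIter θ n) ω = ω) {m : ℕ} {z : ℤ → A} (hz : z ∈ substShift θ)
    {s : ℤ} (hs : s ≠ 0) (hr : IsCenteredRepr (substIter θ m) z s ω) {k N : ℕ} (hkN : k + m ≤ N) :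
    ∃ z' t, IsCenteredRepr (substIter θ N) z' t ω ∧ IsCut θ k N z' t ∧
      ¬ IsCut θ (k + m) N z' t := by
  have hθ := h.nonErasing
  obtain ⟨i, rfl⟩ := Nat.exists_eq_add_of_le hkN
  obtain ⟨w, -, o, ho⟩ := h.exists_isCenteredRepr hz i
  have hfix : IsCenteredRepr (substIter θ k) ω 0 ω :=
    ⟨le_rfl, Nat.cast_pos.2 ((hθ.iter k).length_pos _), by rw [shiftBy_zero, hω]⟩
  have hrepr := hfix.comp hθ (hr.comp hθ ho)
  rw [add_zero, ← add_assoc] at hrepr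
  refine ⟨w, _, hrepr, ⟨_, by rw [show k + m + i - k = m + i by omega]⟩, ?_⟩
  rintro ⟨c, hc⟩
  set x := substImage (substIter θ i) w with hx
  rw [Nat.add_sub_cancel_left, hθ.cutPos_substIter_add, hθ.substImage_substIter_add, ← hx] at hc
  have hc' := ((hθ.iter k).strictMono_cutPos _).injective hc
  have hmono := (hθ.iter m).strictMono_cutPos x
  have hlt := hr.lt_length
  rw [ho.eq_shiftBy, shiftBy_apply, zero_add, ← hx] at hlt
  have hnonneg := hr.nonneg
  have hoc : o < c := hmono.lt_iff_lt.1 (by omega)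
  have hco : c < o + 1 := hmono.lt_iff_lt.1 (by rw [cutPos_add_one]; omega)
  omega

/-- Recognizability at the fixed point `ω`. If `ω` had a representation with `s ≠ 0`, then
applying `θ` would yield arbitrarily many representations of one high level `N`, distinguished by
the level up to which their origins are cuts. By linear recurrence the origins of representations
with the same letter differ by at least a fixed proportion of the length of the block. -/
lemma eq_zero_of_isCenteredRepr (h : ProperPrimitiveFrom θ d l r) (haper : SubstAperiodic θ)
    {ω : ℤ → A} (hω : ∀ n, substImage (substIter θ n) ω = ω) {m : ℕ} {z : ℤ → A}
    (hz : z ∈ substShift θ) {s : ℤ} (hr : IsCenteredRepr (substIter θ m) z s ω) : s = 0 := by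
  by_contra hs
  cases nonempty_fintype A
  obtain ⟨C, hC, hsep⟩ := h.exists_length_le_mul_sub haper
  set n := Fintype.card A * C + 1 with hn
  have hlevel (j : Fin n) : (j + 1 : ℕ) * m ≤ n * m := Nat.mul_le_mul_right m j.2
  have hcuts (j : Fin n) := h.exists_isCut_not_isCut hω hz hs hr (k := j * m) (N := n * m)
    (by have := hlevel j; rwa [add_one_mul] at this)
  choose z' t ht hcut hncut using hcuts
  obtain ⟨j, j', hne, hzz', hle, hlt⟩ := exists_ne_mul_sub_lt (ι := Fin n)
    (len := fun a => (substIter θ (n * m) a).length) (a := fun j => z' j 0) (t := t) hC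
    (by simp [hn]) (fun j => (ht j).nonneg) fun j => (ht j).lt_length
  have heq : t j = t j' := by
    by_contra hne
    exact (hsep _ _ _ _ _ hzz' (lt_of_le_of_ne hle hne)
      ((ht j).eq_shiftBy.symm.trans (ht j').eq_shiftBy)).not_gt hlt
  clear hle hlt
  wlog hjj' : j < j' generalizing j j'
  · exact this j' j hne.symm hzz'.symm heq.symm (lt_of_le_of_ne (not_lt.1 hjj') hne.symm)
  refine hncut j ?_
  have hj' : IsCut θ (j * m + m) (n * m) (z' j') (t j') := by
    refine (hcut j').mono h.nonErasing ?_ (Nat.mul_le_mul_right m j'.2.le)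
    rw [← add_one_mul]
    exact Nat.mul_le_mul_right m hjj'
  rw [heq]
  refine hj'.congr h.nonErasing ?_ hzz'.symm (ht j').nonneg (ht j').lt_length
  rw [← add_one_mul]
  exact hlevel j

lemma exists_agree_imp_eq_zero (h : ProperPrimitiveFrom θ d l r) (haper : SubstAperiodic θ)
    {ω : ℤ → A} (hω : ∀ n, substImage (substIter θ n) ω = ω) (m : ℕ) :
    ∃ K, ∀ y, Agree K y ω →
      ∀ z ∈ substShift θ, ∀ s, IsCenteredRepr (substIter θ m) z s y → s = 0 := by
  by_contra! hcon
  have hmem : ω ∈ closure {y | ∃ z ∈ substShift θ, ∃ s ∈ {s : ℤ | s ≠ 0},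
      IsCenteredRepr (substIter θ m) z s y} := by
    refine mem_closure_iff_agree.2 fun K => ?_
    obtain ⟨y, hy, z, hz, s, hr, hs⟩ := hcon K
    exact ⟨y, ⟨z, hz, s, hs, hr⟩, hy⟩
  rw [((h.nonErasing.iter m).isClosed_setOf_isCenteredRepr
    (isCompact_substShift θ) _).closure_eq] at hmem
  obtain ⟨z, hz, s, hs, hr⟩ := hmem
  exact hs (h.eq_zero_of_isCenteredRepr haper hω hz hr)

lemma exists_agree_imp_eq_cutPos (h : ProperPrimitiveFrom θ d l r) (haper : SubstAperiodic θ)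
    {ω : ℤ → A} (hω : ∀ n, substImage (substIter θ n) ω = ω) (m : ℕ) :
    ∃ K, ∀ x ∈ substShift θ, Agree K x ω → ∃ z ∈ substShift θ, substImage (substIter θ m) z = x ∧
      ∀ k, Agree K (shiftBy k x) ω → ∃ v, k = cutPos (substIter θ m) z v := by
  obtain ⟨K, hK⟩ := h.exists_agree_imp_eq_zero haper hω m
  refine ⟨K, fun x hx hxω => ?_⟩
  obtain ⟨z, hz, s, hs⟩ := h.exists_isCenteredRepr hx m
  have hzx : substImage (substIter θ m) z = x := by
    rw [hs.eq_shiftBy, hK x hxω z hz s hs, shiftBy_zero]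
  refine ⟨z, hz, hzx, fun k hk => ?_⟩
  obtain ⟨v, hv⟩ := (h.nonErasing.iter m).exists_isCenteredRepr z k
  rw [hzx] at hv
  exact ⟨v, sub_eq_zero.1 (hK _ hk _ (shiftBy_mem_substShift hz v) _ hv)⟩

end ProperPrimitiveFrom

end Recognizability

section Roof

variable {A : Type*}

/-- The position to which a speedup with jump function `p` moves the origin of `x` from the
position `i`. -/
def stepPos (p : (ℤ → A) → ℕ) (x : ℤ → A) (i : ℤ) : ℤ := i + p (shiftBy i x)

/-- The speedup with jump function `p` moves the origin of `x` from the position `i` to the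
position `j` in some number of steps. -/
def Reaches (p : (ℤ → A) → ℕ) (x : ℤ → A) (i j : ℤ) : Prop := ∃ n : ℕ, (stepPos p x)^[n] i = j

lemma Reaches.trans {p : (ℤ → A) → ℕ} {x : ℤ → A} {i j k : ℤ} (h : Reaches p x i j)
    (h' : Reaches p x j k) : Reaches p x i k := by
  obtain ⟨m, rfl⟩ := h
  obtain ⟨n, rfl⟩ := h'
  exact ⟨n + m, Function.iterate_add_apply _ _ _ _⟩

lemma reaches_shiftBy_iff {p : (ℤ → A) → ℕ} {x : ℤ → A} {s i j : ℤ} :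
    Reaches p (shiftBy s x) i j ↔ Reaches p x (i + s) (j + s) := by
  have hsemi : Function.Semiconj (· + s) (stepPos p (shiftBy s x)) (stepPos p x) := fun i => by
    simp only [stepPos, shiftBy_shiftBy, add_right_comm]
  simp only [Reaches, ← (hsemi.iterate_right _).eq, add_left_inj]

/-- A positive jump function that is bounded by `M` and, on the shift-invariant set `X`, depends
on the coordinates in `[-ρ, ρ]` only. -/
structure IsLocalJump (X : Set (ℤ → A)) (p : (ℤ → A) → ℕ) (M ρ : ℕ) : Prop where
  shiftBy_mem : ∀ x ∈ X, ∀ k, shiftBy k x ∈ X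
  pos : ∀ x, 1 ≤ p x
  le : ∀ x, p x ≤ M
  congr : ∀ x ∈ X, ∀ y ∈ X, Agree ρ x y → p x = p y

namespace IsLocalJump

variable {X : Set (ℤ → A)} {p : (ℤ → A) → ℕ} {M ρ : ℕ}

lemma lt_stepPos (hp : IsLocalJump X p M ρ) (x : ℤ → A) (i : ℤ) : i < stepPos p x i :=
  lt_add_of_pos_right i (Nat.cast_pos.2 (hp.pos _))

lemma stepPos_le (hp : IsLocalJump X p M ρ) (x : ℤ → A) (i : ℤ) : stepPos p x i ≤ i + M :=
  add_le_add_right (Nat.cast_le.2 (hp.le _)) i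

lemma strictMono_iterate_stepPos (hp : IsLocalJump X p M ρ) (x : ℤ → A) (i : ℤ) :
    StrictMono fun n : ℕ => (stepPos p x)^[n] i :=
  strictMono_nat_of_lt_succ fun n => by
    rw [Function.iterate_succ_apply']
    exact hp.lt_stepPos x _

lemma add_le_iterate_stepPos (hp : IsLocalJump X p M ρ) (x : ℤ → A) (i : ℤ) (n : ℕ) :
    i + n ≤ (stepPos p x)^[n] i := by
  induction n with
  | zero => simp
  | succ n ih =>
    have := hp.strictMono_iterate_stepPos x i (lt_add_one n)
    dsimp only at this
    omega

lemma iterate_stepPos_le (hp : IsLocalJump X p M ρ) (x : ℤ → A) (i : ℤ) (n : ℕ) :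
    (stepPos p x)^[n] i ≤ i + M * n := by
  induction n with
  | zero => simp
  | succ n ih =>
    rw [Function.iterate_succ_apply']
    refine (hp.stepPos_le x _).trans ?_
    push_cast
    linarith

lemma iterate_stepPos_congr (hp : IsLocalJump X p M ρ) {x y : ℤ → A} (hx : x ∈ X) (hy : y ∈ X)
    {i b : ℤ} (hxy : Set.EqOn x y (Set.Ico (i - ρ) (b + ρ))) {n : ℕ}
    (hb : (stepPos p x)^[n] i ≤ b) : (stepPos p x)^[n] i = (stepPos p y)^[n] i := by
  induction n with
  | zero => rfl
  | succ n ih =>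
    rw [Function.iterate_succ_apply'] at hb ⊢
    have hlt := hp.lt_stepPos x ((stepPos p x)^[n] i)
    have hle := hp.add_le_iterate_stepPos x i n
    have hagree : Agree ρ (shiftBy ((stepPos p x)^[n] i) x) (shiftBy ((stepPos p x)^[n] i) y) :=
      fun t ⟨ht, ht'⟩ => hxy ⟨by omega, by omega⟩
    rw [Function.iterate_succ_apply', ← ih (by omega), stepPos, stepPos,
      hp.congr _ (hp.shiftBy_mem x hx _) _ (hp.shiftBy_mem y hy _) hagree]

lemma reaches_congr (hp : IsLocalJump X p M ρ) {x y : ℤ → A} (hx : x ∈ X) (hy : y ∈ X)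
    {i j : ℤ} (hxy : Set.EqOn x y (Set.Ico (i - ρ) (j + ρ))) (h : Reaches p x i j) :
    Reaches p y i j := by
  obtain ⟨n, rfl⟩ := h
  exact ⟨n, (hp.iterate_stepPos_congr hx hy hxy le_rfl).symm⟩

lemma exists_reaches_between (hp : IsLocalJump X p M ρ) {x : ℤ → A} {i j c : ℤ}
    (h : Reaches p x i j) (hi : i < c) (hj : c ≤ j) :
    ∃ k, c ≤ k ∧ k < c + M ∧ Reaches p x i k ∧ Reaches p x k j := by
  obtain ⟨n, rfl⟩ := h
  induction n generalizing i with
  | zero => exact absurd (hi.trans_le hj) (lt_irrefl i)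
  | succ n ih =>
    rw [Function.iterate_succ_apply] at hj ⊢
    have hstep : Reaches p x i (stepPos p x i) := ⟨1, rfl⟩
    rcases lt_or_ge (stepPos p x i) c with hc | hc
    · obtain ⟨k, hck, hkc, hik, hkj⟩ := ih hc hj
      exact ⟨k, hck, hkc, hstep.trans hik, hkj⟩
    · exact ⟨_, hc, (hp.stepPos_le x i).trans_lt (by omega), hstep, n, rfl⟩

end IsLocalJump

end Roof

section Crossing

variable {A : Type*} [Nonempty A] {θ : A → List A} {d : ℕ} {l r : A} {p : (ℤ → A) → ℕ} {M ρ : ℕ}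

/-- The speedup with jump function `p` can pass through a block `θⁿ(a)`, entering it at its `i`-th
position and arriving at the `j`-th position after its end. As the jumps are bounded by `M`, so
are the entrances `i` and `j`. -/
def Crossing (θ : A → List A) (p : (ℤ → A) → ℕ) (M n : ℕ) (a : A) (i j : Fin M) : Prop :=
  ∃ z ∈ substShift θ, z 0 = a ∧
    Reaches p (substImage (substIter θ n) z) i ((substIter θ n a).length + j)

lemma NonErasing.crossing_of_reaches (hθ : NonErasing θ) {n : ℕ} {z : ℤ → A}
    (hz : z ∈ substShift θ) {v : ℤ} {i j : Fin M}
    (h : Reaches p (substImage (substIter θ n) z) (cutPos (substIter θ n) z v + i)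
      (cutPos (substIter θ n) z (v + 1) + j)) : Crossing θ p M n (z v) i j := by
  refine ⟨shiftBy v z, shiftBy_mem_substShift hz v, by rw [shiftBy_apply, zero_add], ?_⟩
  rw [(hθ.iter n).substImage_shiftBy, reaches_shiftBy_iff]
  convert h using 1
  · ring
  · rw [cutPos_add_one]
    ring

namespace ProperPrimitiveFrom

lemma reaches_of_crossing (h : ProperPrimitiveFrom θ d l r)
    (hp : IsLocalJump (substShift θ) p M ρ) {k n : ℕ} (hn : d ≤ n)
    (hk : ∀ a, M + ρ ≤ (substIter θ k a).length) {z : ℤ → A} (hz : z ∈ substShift θ) {v : ℤ}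
    {i j : Fin M} (hc : Crossing θ p M (k + n) (z v) i j) :
    Reaches p (substImage (substIter θ (k + n)) z) (cutPos (substIter θ (k + n)) z v + i)
      (cutPos (substIter θ (k + n)) z (v + 1) + j) := by
  obtain ⟨y, hy, hyz, hc⟩ := hc
  have hyz' : Set.EqOn y (shiftBy v z) (Set.Ico 0 1) := fun t ⟨ht, ht'⟩ => by
    rw [show t = 0 by omega, shiftBy_apply, zero_add, hyz]
  have himage := h.substImage_eqOn_around hn hk zero_le_one hyz'
  rw [cutPos_one, hyz] at himage
  have hreach := hp.reaches_congr (h.nonErasing.substImage_mem_substShift hy _)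
    (h.nonErasing.substImage_mem_substShift (shiftBy_mem_substShift hz v) _)
    (himage.mono (Set.Ico_subset_Ico (by omega) (by omega))) hc
  rw [(h.nonErasing.iter _).substImage_shiftBy, reaches_shiftBy_iff] at hreach
  convert hreach using 1
  · ring
  · rw [cutPos_add_one]
    ring

lemma reaches_of_crossing_imp (h : ProperPrimitiveFrom θ d l r)
    (hp : IsLocalJump (substShift θ) p M ρ) {m k n : ℕ}
    (hm : ∀ a, M ≤ (substIter θ m a).length) (hn : d ≤ n)
    (hk : ∀ a, M + ρ ≤ (substIter θ k a).length)
    (hcross : ∀ a i j, Crossing θ p M m a i j → Crossing θ p M (k + n) a i j)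
    {z : ℤ → A} (hz : z ∈ substShift θ) {v w : ℤ} (hvw : v + 1 ≤ w) {i : Fin M} (j : Fin M)
    (hreach : Reaches p (substImage (substIter θ m) z) (cutPos (substIter θ m) z v + i)
      (cutPos (substIter θ m) z w + j)) :
    Reaches p (substImage (substIter θ (k + n)) z) (cutPos (substIter θ (k + n)) z v + i)
      (cutPos (substIter θ (k + n)) z w + j) := by
  induction w, hvw using Int.leInduction generalizing j with
  | base =>
    exact h.reaches_of_crossing hp hn hk hz
      (hcross _ _ _ (h.nonErasing.crossing_of_reaches hz hreach))
  | succ w hvw ih =>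
    have hstrict := (h.nonErasing.iter m).strictMono_cutPos z
    have hmono := hstrict.monotone hvw
    have hlong := hm (z v)
    have hw := hstrict (lt_add_one w)
    rw [cutPos_add_one] at hmono
    obtain ⟨_, hle, hlt, hvk, hkw⟩ :=
      hp.exists_reaches_between hreach (c := cutPos (substIter θ m) z w) (by omega) (by omega)
    obtain ⟨u, rfl⟩ := Int.exists_add_of_le hle
    have hu : u < M := by omega
    exact (ih ⟨u, hu⟩ hvk).trans (h.reaches_of_crossing hp hn hk hz
      (hcross _ _ _ (h.nonErasing.crossing_of_reaches (i := ⟨u, hu⟩) hz hkw)))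

variable [Finite A] [TopologicalSpace A] [DiscreteTopology A]

/-- There are only finitely many crossing relations, so some level `m` has the same crossings as
infinitely many levels `m + q`; the neighbourhood of `ω` is the one on which level `m` is
recognizable. -/
lemma exists_reaches_substImage (h : ProperPrimitiveFrom θ d l r) (haper : SubstAperiodic θ)
    (hp : IsLocalJump (substShift θ) p M ρ) {ω : ℤ → A}
    (hω : ∀ n, substImage (substIter θ n) ω = ω) :
    ∃ K : ℕ, ∀ Q : ℕ, ∃ q ≥ Q, ∀ x ∈ substShift θ, ∀ k : ℤ, 1 ≤ k → Agree K x ω →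
      Agree K (shiftBy k x) ω → Reaches p x 0 k →
        Reaches p (substImage (substIter θ q) x) 0 (cutPos (substIter θ q) x k) := by
  have hM : 0 < M := (hp.pos ω).trans (hp.le ω)
  obtain ⟨k₀, hk₀⟩ := h.exists_le_length (M + ρ)
  obtain ⟨E, hE⟩ := Finite.exists_infinite_fiber fun n => Crossing θ p M (k₀ + (d + n))
  rw [Set.infinite_coe_iff] at hE
  obtain ⟨n, hn : _ = E⟩ := hE.nonempty
  obtain ⟨K, hK⟩ := h.exists_agree_imp_eq_cutPos haper hω (k₀ + (d + n))
  refine ⟨K, fun Q => ?_⟩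
  obtain ⟨n', hn' : _ = E, hlt⟩ := hE.exists_gt (n + Q)
  obtain ⟨q, rfl⟩ := Nat.exists_eq_add_of_le (show n ≤ n' by omega)
  refine ⟨q, by omega, fun x hx k hk hxω hkω hreach => ?_⟩
  obtain ⟨z, hz, rfl, hcut⟩ := hK x hx hxω
  obtain ⟨v, rfl⟩ := hcut k hkω
  have hv : 0 + 1 ≤ v := by
    rw [Int.add_one_le_iff, ← ((h.nonErasing.iter (k₀ + (d + n))).strictMono_cutPos z).lt_iff_lt,
      cutPos_zero]
    omega
  have hcross : ∀ a i j, Crossing θ p M (k₀ + (d + n)) a i j →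
      Crossing θ p M (k₀ + (d + (n + q))) a i j := by
    rw [show Crossing θ p M (k₀ + (d + n)) = _ from hn.trans hn'.symm]
    exact fun _ _ _ => id
  have hlevel := h.reaches_of_crossing_imp hp
    (fun a => (Nat.le_add_right M ρ).trans (hk₀ _ (Nat.le_add_right _ _) a))
    (Nat.le_add_right d _) (hk₀ k₀ le_rfl) hcross hz hv (i := ⟨0, hM⟩) ⟨0, hM⟩
    (by simpa using hreach)
  rw [← h.nonErasing.substImage_substIter_add, ← h.nonErasing.cutPos_substIter_add,
    show q + (k₀ + (d + n)) = k₀ + (d + (n + q)) by omega]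
  simpa using hlevel

end ProperPrimitiveFrom

end Crossing

section MinimalHomeo

variable {Y : Type*} [TopologicalSpace Y] {S : Equiv.Perm Y}

/-- The permutation `S` is a minimal homeomorphism: both `S` and its inverse are continuous and
all orbits of `S` are dense. -/
structure IsMinimalHomeo (S : Equiv.Perm Y) : Prop where
  continuous : Continuous S
  continuous_symm : Continuous S.symm
  dense : ∀ x, Dense (Set.range fun n : ℤ => (S ^ n) x)

lemma IsMinimalHomeo.continuous_zpow (hS : IsMinimalHomeo S) (n : ℤ) :
    Continuous fun x => (S ^ n) x := by
  induction n with
  | zero => exact continuous_id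
  | succ n ih =>
    simp only [zpow_add_one, Equiv.Perm.mul_apply]
    exact ih.comp hS.continuous
  | pred n ih =>
    simp only [zpow_sub_one, Equiv.Perm.mul_apply]
    exact ih.comp hS.continuous_symm

/-- Every orbit of `S` visits `V` in each of its segments of length `H + 1`. -/
def HitsWithin (S : Equiv.Perm Y) (V : Set Y) (H : ℕ) : Prop := ∀ x, ∃ n ≤ H, (S ^ n) x ∈ V

lemma IsMinimalHomeo.exists_hitsWithin [CompactSpace Y] (hS : IsMinimalHomeo S) {V : Set Y}
    (hV : IsOpen V) (hne : V.Nonempty) : ∃ H, HitsWithin S V H := by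
  obtain ⟨s, hs⟩ := isCompact_univ.elim_finite_subcover (fun n : ℤ => (S ^ n) ⁻¹' V)
    (fun n => hV.preimage (hS.continuous_zpow n)) fun x _ => by
      obtain ⟨_, hy, n, rfl⟩ := (hS.dense x).inter_open_nonempty V hV hne
      exact Set.mem_iUnion.2 ⟨n, hy⟩
  set N := s.sup Int.natAbs
  refine ⟨2 * N, fun x => ?_⟩
  obtain ⟨n, hns, hn⟩ := Set.mem_iUnion₂.1 (hs (Set.mem_univ ((S ^ N) x)))
  have hnN : n.natAbs ≤ N := Finset.le_sup (f := Int.natAbs) hns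
  refine ⟨(n + N).toNat, by omega, ?_⟩
  rwa [← zpow_natCast, Int.toNat_of_nonneg (by omega), zpow_add, zpow_natCast]

end MinimalHomeo

section Tower

variable {Y : Type*} {S : Equiv.Perm Y} {U : Set Y} {H : ℕ}

/-- The time elapsed since the last visit of the orbit of `x` to `U`: the floor of `x` in the
tower over `U`. It is `0` if there is no such visit. -/
noncomputable def lastVisit (S : Equiv.Perm Y) (U : Set Y) (x : Y) : ℕ :=
  sInf {n : ℕ | (S ^ (-(n : ℤ))) x ∈ U}

/-- The point below `x` in the ground floor of the tower over `U`. -/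
noncomputable def base (S : Equiv.Perm Y) (U : Set Y) (x : Y) : Y :=
  (S ^ (-(lastVisit S U x : ℤ))) x

lemma pow_lastVisit_base (S : Equiv.Perm Y) (U : Set Y) (x : Y) :
    (S ^ lastVisit S U x) (base S U x) = x := by
  rw [base, zpow_neg, zpow_natCast, Equiv.Perm.inv_def, Equiv.apply_symm_apply]

namespace HitsWithin

lemma exists_zpow_neg_mem (hU : HitsWithin S U H) (x : Y) :
    ∃ n : ℕ, n ≤ H ∧ (S ^ (-(n : ℤ))) x ∈ U := by
  obtain ⟨n, hn, hnU⟩ := hU ((S ^ (-(H : ℤ))) x)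
  refine ⟨H - n, Nat.sub_le H n, ?_⟩
  rwa [show -((H - n : ℕ) : ℤ) = n + -(H : ℤ) by omega, zpow_add, zpow_natCast]

lemma lastVisit_eq_iff (hU : HitsWithin S U H) {x : Y} {n : ℕ} :
    lastVisit S U x = n ↔ (S ^ (-(n : ℤ))) x ∈ U ∧ ∀ m < n, (S ^ (-(m : ℤ))) x ∉ U := by
  classical
  obtain ⟨m, -, hm⟩ := hU.exists_zpow_neg_mem x
  rw [lastVisit, Nat.sInf_def ⟨m, hm⟩, Nat.find_eq_iff]
  rfl

lemma base_mem (hU : HitsWithin S U H) (x : Y) : base S U x ∈ U := (hU.lastVisit_eq_iff.1 rfl).1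

lemma lastVisit_le (hU : HitsWithin S U H) (x : Y) : lastVisit S U x ≤ H := by
  obtain ⟨n, hn, hnU⟩ := hU.exists_zpow_neg_mem x
  exact (Nat.sInf_le hnU).trans hn

lemma lastVisit_eq_zero_iff (hU : HitsWithin S U H) {x : Y} : lastVisit S U x = 0 ↔ x ∈ U := by
  simp [hU.lastVisit_eq_iff]

lemma base_of_mem (hU : HitsWithin S U H) {x : Y} (hx : x ∈ U) : base S U x = x := by
  rw [base, hU.lastVisit_eq_zero_iff.2 hx, Nat.cast_zero, neg_zero, zpow_zero,
    Equiv.Perm.one_apply]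

lemma lastVisit_apply (hU : HitsWithin S U H) {x : Y} (hx : S x ∉ U) :
    lastVisit S U (S x) = lastVisit S U x + 1 := by
  have hback (n : ℕ) : (S ^ (-((n + 1 : ℕ) : ℤ))) (S x) = (S ^ (-(n : ℤ))) x := by
    rw [← Equiv.Perm.mul_apply, ← zpow_add_one, Nat.cast_add_one, neg_add, neg_add_cancel_right]
  obtain ⟨hmem, hnot⟩ := hU.lastVisit_eq_iff.1 (Eq.refl (lastVisit S U x))
  refine hU.lastVisit_eq_iff.2 ⟨by rwa [hback], fun m hm => ?_⟩
  cases m with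
  | zero => simpa using hx
  | succ m =>
    rw [hback]
    exact hnot m (Nat.lt_of_succ_lt_succ hm)

lemma base_apply (hU : HitsWithin S U H) {x : Y} (hx : S x ∉ U) :
    base S U (S x) = base S U x := by
  rw [base, hU.lastVisit_apply hx, ← Equiv.Perm.mul_apply, ← zpow_add_one, Nat.cast_add_one,
    neg_add, neg_add_cancel_right, base]

variable [TopologicalSpace Y]

lemma continuous_lastVisit (hU : HitsWithin S U H) (hS : IsMinimalHomeo S) (hUc : IsClopen U) :
    Continuous (lastVisit S U) := by
  have hvisit (n : ℕ) : IsClopen {x | (S ^ (-(n : ℤ))) x ∈ U} :=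
    hUc.preimage (hS.continuous_zpow _)
  refine continuous_discrete_rng.2 fun n => ?_
  have e : lastVisit S U ⁻¹' {n} = {x | (S ^ (-(n : ℤ))) x ∈ U} ∩
      ⋂ m ∈ Set.Iio n, {x | (S ^ (-(m : ℤ))) x ∈ U}ᶜ := by
    ext x
    simp [hU.lastVisit_eq_iff]
  rw [e]
  exact (hvisit n).isOpen.inter
    ((Set.finite_Iio n).isOpen_biInter fun m _ => (hvisit m).compl.isOpen)

lemma continuous_base (hU : HitsWithin S U H) (hS : IsMinimalHomeo S) (hUc : IsClopen U) :
    Continuous (base S U) := by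
  have hpow : Continuous fun z : ℕ × Y => (S ^ (-(z.1 : ℤ))) z.2 :=
    continuous_prod_of_discrete_left.2 fun n => hS.continuous_zpow (-n)
  exact hpow.comp ((hU.continuous_lastVisit hS hUc).prodMk continuous_id)

end HitsWithin

end Tower

section Itinerary

variable {Y B : Type*} {S : Equiv.Perm Y} {c : Y → B}

/-- The sequence of the codes along the orbit of `x`. -/
def itinerary (S : Equiv.Perm Y) (c : Y → B) (x : Y) : ℤ → B := fun n => c ((S ^ n) x)

lemma itinerary_natCast (S : Equiv.Perm Y) (c : Y → B) (x : Y) (n : ℕ) :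
    itinerary S c x n = c ((S ^ n) x) := by rw [itinerary, zpow_natCast]

@[simp] lemma itinerary_zero (S : Equiv.Perm Y) (c : Y → B) (x : Y) :
    itinerary S c x 0 = c x := rfl

lemma itinerary_zpow (S : Equiv.Perm Y) (c : Y → B) (k : ℤ) (x : Y) :
    itinerary S c ((S ^ k) x) = shiftBy k (itinerary S c x) := by
  funext n
  rw [shiftBy_apply, itinerary, itinerary, zpow_add, Equiv.Perm.mul_apply]

lemma itinerary_pow (S : Equiv.Perm Y) (c : Y → B) (n : ℕ) (x : Y) :
    itinerary S c ((S ^ n) x) = shiftMap^[n] (itinerary S c x) := by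
  rw [iterate_shiftMap, ← itinerary_zpow, zpow_natCast]

lemma continuous_itinerary [TopologicalSpace Y] [TopologicalSpace B] (hS : IsMinimalHomeo S)
    (hc : Continuous c) : Continuous (itinerary S c) :=
  continuous_pi fun n => hc.comp (hS.continuous_zpow n)

end Itinerary

section SubstitutiveCoding

variable {Y B : Type*} {S : Equiv.Perm Y} {c : Y → B} {F : Y → Y} {t : Y → ℕ}

/-- A self-map `F` sending orbits of `S` into orbits of `S`, such that the code of `x` determines
the codes along the segment of the orbit of `F x` that precedes `F (S x)`. These segments play
the role of the images of letters under a substitution, and the last four conditions make this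
substitution growing, primitive and proper. -/
structure IsSubstitutiveCoding (S : Equiv.Perm Y) (c : Y → B) (F : Y → Y) (t : Y → ℕ) :
    Prop where
  map_apply : ∀ x, F (S x) = (S ^ t x) (F x)
  time_congr : ∀ x y, c x = c y → t x = t y
  code_congr : ∀ x y, c x = c y → ∀ i < t x, c ((S ^ i) (F x)) = c ((S ^ i) (F y))
  two_le : ∀ x, 2 ≤ t x
  exists_code_eq : ∀ x b, ∃ i < t x, c ((S ^ i) (F x)) = b
  code_first : ∀ x y, c (F x) = c (F y)
  code_last : ∀ x y, c (S.symm (F x)) = c (S.symm (F y))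

/-- The substitution `τ` maps the code of `x` to the word of the codes along the first `t x` points
of the orbit of `F x`. -/
def ReadsSegments (S : Equiv.Perm Y) (c : Y → B) (F : Y → Y) (t : Y → ℕ) (τ : B → List B) : Prop :=
  ∀ x, τ (c x) = window (itinerary S c (F x)) 0 (t x)

namespace IsSubstitutiveCoding

lemma exists_subst_code (h : IsSubstitutiveCoding S c F t) :
    ∃ τ : B → List B, ReadsSegments S c F t τ := by
  refine ⟨Function.extend c (fun x => window (itinerary S c (F x)) 0 (t x)) fun _ => [],
    Function.FactorsThrough.extend_apply (fun x y hxy => ?_) _⟩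
  rw [← h.time_congr x y hxy, window_eq_window_iff]
  intro i hi
  simpa only [zero_add, itinerary_natCast] using h.code_congr x y hxy i hi

variable {τ : B → List B}

lemma two_le_length (h : IsSubstitutiveCoding S c F t) (hc : Function.Surjective c)
    (hτ : ReadsSegments S c F t τ) (b : B) : 2 ≤ (τ b).length := by
  obtain ⟨x, rfl⟩ := hc b
  rw [hτ, length_window]
  exact h.two_le x

lemma substProper [Nonempty Y] (h : IsSubstitutiveCoding S c F t) (hc : Function.Surjective c)
    (hτ : ReadsSegments S c F t τ) : SubstProper τ := by
  obtain ⟨x₀⟩ := ‹Nonempty Y›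
  refine ⟨c (F x₀), c (S.symm (F x₀)), 1, fun a => ?_⟩
  obtain ⟨x, rfl⟩ := hc a
  obtain ⟨s, hs⟩ := Nat.exists_eq_add_of_le' (one_le_two.trans (h.two_le x))
  rw [substIter_one, hτ, hs]
  constructor
  · rw [add_comm, window_add, window_one, List.singleton_append, List.head?_cons, itinerary_zero,
      h.code_first x x₀]
  · have hlast : (S ^ s) (F x) = S.symm (F (S x)) := by
      rw [h.map_apply, hs, pow_succ', Equiv.Perm.mul_apply, Equiv.symm_apply_apply]
    rw [window_add_one, List.getLast?_concat, zero_add, itinerary_natCast, hlast,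
      h.code_last (S x) x₀]

lemma mem_subst (h : IsSubstitutiveCoding S c F t) (hc : Function.Surjective c)
    (hτ : ReadsSegments S c F t τ) (a b : B) : b ∈ τ a := by
  obtain ⟨x, rfl⟩ := hc a
  obtain ⟨i, hi, hb⟩ := h.exists_code_eq x b
  rw [hτ, window, List.mem_ofFn]
  exact ⟨⟨i, hi⟩, by rw [zero_add, itinerary_natCast, hb]⟩

lemma nonErasing (h : IsSubstitutiveCoding S c F t) (hc : Function.Surjective c)
    (hτ : ReadsSegments S c F t τ) : NonErasing τ := fun b =>
  List.length_pos_iff.1 (two_pos.trans_le (h.two_le_length hc hτ b))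

lemma itinerary_map [Nonempty B] (h : IsSubstitutiveCoding S c F t) (hc : Function.Surjective c)
    (hτ : ReadsSegments S c F t τ) (x : Y) :
    itinerary S c (F x) = substImage τ (itinerary S c x) := by
  have hlen (y : Y) : (τ (c y)).length = t y := by rw [hτ, length_window]
  have hF (i : ℤ) : F ((S ^ i) x) = (S ^ cutPos τ (itinerary S c x) i) (F x) := by
    refine eq_act_cutPos (f := fun i => F ((S ^ i) x)) (φ := fun k y => (S ^ k) y)
      (fun _ => rfl) (fun k l y => by rw [zpow_add, Equiv.Perm.mul_apply]) (fun i => ?_) i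
    rw [add_comm i 1, zpow_one_add, Equiv.Perm.mul_apply, h.map_apply, itinerary, hlen,
      zpow_natCast]
  refine (h.nonErasing hc hτ).eq_substImage fun i => ?_
  have hi := hτ ((S ^ i) x)
  rwa [hF, itinerary_zpow, window_shiftBy, zero_add, ← hlen, eq_comm] at hi

lemma substIter_code (h : IsSubstitutiveCoding S c F t) (hc : Function.Surjective c)
    (hτ : ReadsSegments S c F t τ) (k : ℕ) (x : Y) :
    substIter τ k (c x) = window (itinerary S c (F^[k] x)) 0 (substIter τ k (c x)).length := by
  have : Nonempty B := ⟨c x⟩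
  induction k with
  | zero => simp [substIter, window_one]
  | succ k ih =>
    have hwin := (h.nonErasing hc hτ).window_substImage_flatMap (itinerary S c (F^[k] x)) 0
      (substIter τ k (c x)).length
    rw [← ih, cutPos_zero, ← h.itinerary_map hc hτ] at hwin
    rw [add_comm k 1, substIter_add, show substIter τ 1 = τ from funext (substIter_one τ),
      add_comm 1 k, Function.iterate_succ_apply', hwin]

lemma two_pow_le_length (h : IsSubstitutiveCoding S c F t) (hc : Function.Surjective c)
    (hτ : ReadsSegments S c F t τ) (k : ℕ) (b : B) :
    2 ^ k ≤ (substIter τ k b).length := by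
  induction k with
  | zero => simp [substIter]
  | succ k ih =>
    rw [add_comm k 1, substIter_add, List.length_flatMap, add_comm 1 k, pow_succ]
    have hsum := List.card_nsmul_le_sum ((substIter τ k b).map fun a => (substIter τ 1 a).length) 2
      (by simpa using fun a _ => h.two_le_length hc hτ a)
    rw [List.length_map, smul_eq_mul] at hsum
    exact (Nat.mul_le_mul_right 2 ih).trans hsum

lemma substPrimitive (h : IsSubstitutiveCoding S c F t) (hc : Function.Surjective c)
    (hτ : ReadsSegments S c F t τ) : SubstPrimitive τ := by
  refine ⟨fun a b => ⟨1, by simpa using h.mem_subst hc hτ a b⟩, fun a => ?_⟩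
  exact tendsto_atTop_mono (fun k => h.two_pow_le_length hc hτ k a)
    (tendsto_pow_atTop_atTop_of_one_lt one_lt_two)

variable [TopologicalSpace Y] [CompactSpace Y] [TopologicalSpace B] [DiscreteTopology B]

lemma itinerary_mem_substShift (h : IsSubstitutiveCoding S c F t) (hS : IsMinimalHomeo S)
    (hcont : Continuous c) (hc : Function.Surjective c)
    (hτ : ReadsSegments S c F t τ) (x : Y) :
    itinerary S c x ∈ substShift τ := by
  rw [mem_substShift_iff]
  intro i n
  have hVo : IsOpen {y | window (itinerary S c y) 0 n = window (itinerary S c x) i n} := by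
    simp only [window_eq_window_iff, Set.ofPred_forall]
    refine (Set.finite_Iio n).isOpen_biInter fun s _ => ?_
    exact (isOpen_discrete {itinerary S c x (i + s)}).preimage
      ((continuous_apply (0 + (s : ℤ))).comp (continuous_itinerary hS hcont))
  obtain ⟨H, hH⟩ := hS.exists_hitsWithin hVo
    ⟨(S ^ i) x, by rw [Set.mem_ofPred_eq, itinerary_zpow, window_shiftBy, zero_add]⟩
  obtain ⟨m, hm, hmV⟩ := hH (F^[H + n] x)
  rw [Set.mem_ofPred_eq, itinerary_pow, iterate_shiftMap, window_shiftBy] at hmV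
  refine ⟨H + n, c x, ?_⟩
  have hlen := (Nat.lt_two_pow_self (n := H + n)).trans_le (h.two_pow_le_length hc hτ _ (c x))
  rw [← hmV, h.substIter_code hc hτ]
  exact window_isInfix_window _ (by omega) (by omega)

lemma range_itinerary (h : IsSubstitutiveCoding S c F t) (hS : IsMinimalHomeo S)
    (hcont : Continuous c) (hc : Function.Surjective c)
    (hτ : ReadsSegments S c F t τ) :
    Set.range (itinerary S c) = substShift τ := by
  refine (Set.range_subset_iff.2 (h.itinerary_mem_substShift hS hcont hc hτ)).antisymm
    fun y hy => ?_
  have hclosed := (isCompact_range (continuous_itinerary hS hcont)).isClosed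
  refine hclosed.closure_subset (mem_closure_iff_agree.2 fun K => ?_)
  obtain ⟨k, b, hb⟩ := mem_substShift_iff.1 hy (-K) (2 * K + 1)
  obtain ⟨x, rfl⟩ := hc b
  rw [h.substIter_code hc hτ] at hb
  obtain ⟨j, -, hj⟩ := exists_eq_window_of_isInfix hb
  rw [length_window, eq_comm, zero_add, window_eq_window_iff] at hj
  refine ⟨_, ⟨(S ^ ((j : ℤ) + K)) (F^[k] x), rfl⟩, fun s ⟨hs, hs'⟩ => ?_⟩
  rw [itinerary_zpow, shiftBy_apply]
  convert hj (s + K).toNat (by omega) using 2 <;> omega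

lemma substAperiodic (h : IsSubstitutiveCoding S c F t) (hS : IsMinimalHomeo S)
    (hcont : Continuous c) (hc : Function.Surjective c)
    (hinj : Function.Injective (itinerary S c)) (haper : ∀ x, ∀ n : ℕ, 0 < n → (S ^ n) x ≠ x)
    (hτ : ReadsSegments S c F t τ) : SubstAperiodic τ := by
  intro y hy n hn hyn
  rw [← h.range_itinerary hS hcont hc hτ] at hy
  obtain ⟨x, rfl⟩ := hy
  rw [← itinerary_pow] at hyn
  exact haper x n hn (hinj hyn)

theorem exists_subst_homeomorph [Nonempty Y] (h : IsSubstitutiveCoding S c F t)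
    (hS : IsMinimalHomeo S) (hcont : Continuous c) (hc : Function.Surjective c)
    (hinj : Function.Injective (itinerary S c)) (haper : ∀ x, ∀ n : ℕ, 0 < n → (S ^ n) x ≠ x) :
    ∃ τ : B → List B, (∀ b, τ b ≠ []) ∧ SubstProper τ ∧ SubstPrimitive τ ∧ SubstAperiodic τ ∧
      ∃ ψ : Y ≃ₜ substShift τ, ∀ x, (ψ (S x) : ℤ → B) = shiftMap (ψ x) := by
  obtain ⟨τ, hτ⟩ := h.exists_subst_code
  refine ⟨τ, h.nonErasing hc hτ, h.substProper hc hτ, h.substPrimitive hc hτ,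
    h.substAperiodic hS hcont hc hinj haper hτ, ?_⟩
  have hmem := h.itinerary_mem_substShift hS hcont hc hτ
  have hbij : Function.Bijective (Set.codRestrict (itinerary S c) (substShift τ) hmem) := by
    refine ⟨hinj.codRestrict hmem, fun ⟨y, hy⟩ => ?_⟩
    rw [← h.range_itinerary hS hcont hc hτ] at hy
    obtain ⟨x, rfl⟩ := hy
    exact ⟨x, rfl⟩
  refine ⟨Continuous.homeoOfEquivCompactToT2 (f := Equiv.ofBijective _ hbij)
    ((continuous_itinerary hS hcont).codRestrict hmem), fun x => itinerary_pow S c 1 x⟩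

end IsSubstitutiveCoding

end SubstitutiveCoding

section Renormalization

variable {Y B : Type*} {S : Equiv.Perm Y} {U : Set Y} {c : Y → B} {ω : Y}

/-- A self-similarity `Θ` of the tower over `U`, compatible with the coding `c`. For `x` on the
top floor, `Θ` maps the base points below `x` and above `S x` to points of one orbit of `S` whose
time difference is `η x ≥ L`; the codes between them depend on the code of `x` only. Near the
image of a base point, the codes are those near `ω`, at least for the times in `[-1, L)`. -/
structure Renormalization (S : Equiv.Perm Y) (U : Set Y) (c : Y → B) (ω : Y) (Θ : Y → Y)
    (η : Y → ℕ) (L : ℕ) : Prop where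
  lastVisit_congr : ∀ x y, c x = c y → lastVisit S U x = lastVisit S U y
  mem_congr : ∀ x y, c x = c y → (S x ∈ U ↔ S y ∈ U)
  map_apply : ∀ x, S x ∈ U → Θ (S x) = (S ^ η x) (Θ (base S U x))
  le_time : ∀ x, L ≤ η x
  time_congr : ∀ x y, c x = c y → η x = η y
  code_congr : ∀ x y, c x = c y →
    ∀ i < η x, c ((S ^ i) (Θ (base S U x))) = c ((S ^ i) (Θ (base S U y)))
  code_eq : ∀ x ∈ U, ∀ i < L, c ((S ^ i) (Θ x)) = c ((S ^ i) ω)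
  code_symm_eq : ∀ x ∈ U, c (S.symm (Θ x)) = c (S.symm ω)

namespace Renormalization

variable {Θ : Y → Y} {η : Y → ℕ} {L J H : ℕ} {e : ℕ → ℕ}

lemma code_pow_map_base (h : Renormalization S U c ω Θ η L) (hU : HitsWithin S U J) (x : Y)
    {k : ℕ} (hk : k < L) : c ((S ^ k) (Θ (base S U x))) = c ((S ^ k) ω) :=
  h.code_eq _ (hU.base_mem x) k hk

lemma code_symm_pow_map_base (h : Renormalization S U c ω Θ η L) (hU : HitsWithin S U J) (x : Y)
    {k : ℕ} (hk : k < L) :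
    c (S.symm ((S ^ k) (Θ (base S U x)))) = c (S.symm ((S ^ k) ω)) := by
  cases k with
  | zero => exact h.code_symm_eq _ (hU.base_mem x)
  | succ k =>
    simp only [pow_succ', Equiv.Perm.mul_apply, Equiv.symm_apply_apply]
    exact h.code_pow_map_base hU x (Nat.lt_of_succ_lt hk)

open Classical in
/-- The floors of the tower are redistributed over the visits `e 0 < e 1 < ⋯` of the orbit of `ω`
to a small neighbourhood of `ω`: the points of floor `j` are sent to the time `e j` after the
image of the base, so that the images of all codes start and end alike. -/
lemma isSubstitutiveCoding (h : Renormalization S U c ω Θ η L) (hU : HitsWithin S U J)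
    (hL : e (J + 1) = L) (he0 : e 0 = 0) (he : ∀ i, e i + H ≤ e (i + 1)) (hH2 : 2 ≤ H)
    (hcode : ∀ x b, ∃ i < H, c ((S ^ i) x) = b) (heω : ∀ i, c ((S ^ e i) ω) = c ω)
    (heω' : ∀ i, c (S.symm ((S ^ e i) ω)) = c (S.symm ω)) :
    IsSubstitutiveCoding S c (fun x => (S ^ e (lastVisit S U x)) (Θ (base S U x)))
      fun x => (if S x ∈ U then η x else e (lastVisit S U x + 1)) - e (lastVisit S U x) := by
  have hmono : StrictMono e := strictMono_nat_of_lt_succ fun i => by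
    have := he i
    omega
  have hlt (x : Y) : e (lastVisit S U x) < L :=
    hL ▸ hmono (Nat.lt_succ_of_le (hU.lastVisit_le x))
  have hle (x : Y) : e (lastVisit S U x + 1) ≤ η x :=
    (hmono.monotone (Nat.succ_le_succ (hU.lastVisit_le x))).trans (hL ▸ h.le_time x)
  have htime (x : Y) :
      H ≤ (if S x ∈ U then η x else e (lastVisit S U x + 1)) - e (lastVisit S U x) := by
    have := he (lastVisit S U x)
    have := hle x
    split_ifs <;> omega
  refine ⟨fun x => ?_, fun x y hxy => ?_, fun x y hxy i hi => ?_, fun x => hH2.trans (htime x),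
    fun x b => ?_, fun x y => ?_, fun x y => ?_⟩
  · rw [← Equiv.Perm.mul_apply, ← pow_add]
    by_cases hx : S x ∈ U
    · rw [if_pos hx, Nat.sub_add_cancel ((hlt x).le.trans (h.le_time x)), hU.base_of_mem hx,
        hU.lastVisit_eq_zero_iff.2 hx, he0, pow_zero, Equiv.Perm.one_apply, h.map_apply x hx]
    · rw [if_neg hx, Nat.sub_add_cancel (hmono (Nat.lt_succ_self _)).le, hU.base_apply hx,
        hU.lastVisit_apply hx]
  · simp only [h.lastVisit_congr x y hxy, h.mem_congr x y hxy, h.time_congr x y hxy]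
  · rw [← h.lastVisit_congr x y hxy]
    simp only [← Equiv.Perm.mul_apply, ← pow_add]
    refine h.code_congr x y hxy _ ?_
    have := hle x
    split_ifs at hi <;> omega
  · obtain ⟨i, hi, hb⟩ := hcode ((S ^ e (lastVisit S U x)) (Θ (base S U x))) b
    exact ⟨i, hi.trans_le (htime x), hb⟩
  · rw [h.code_pow_map_base hU x (hlt x), h.code_pow_map_base hU y (hlt y), heω, heω]
  · rw [h.code_symm_pow_map_base hU x (hlt x), h.code_symm_pow_map_base hU y (hlt y), heω', heω']

end Renormalization

lemma exists_spaced_seq {P : ℕ → Prop} (h0 : P 0) (hP : ∀ m, ∃ n ≥ m, P n) (H : ℕ) :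
    ∃ e : ℕ → ℕ, e 0 = 0 ∧ ∀ i, P (e i) ∧ e i + H ≤ e (i + 1) := by
  choose next hnext hPnext using hP
  refine ⟨Nat.rec 0 fun _ n => next (n + H), rfl, fun i => ⟨?_, hnext _⟩⟩
  cases i with
  | zero => exact h0
  | succ i => exact hPnext _

variable [TopologicalSpace Y] [CompactSpace Y] [TopologicalSpace B] [DiscreteTopology B]

lemma IsMinimalHomeo.exists_code_pow_eq [Finite B] (hS : IsMinimalHomeo S) (hcont : Continuous c)
    (hc : Function.Surjective c) : ∃ H, 2 ≤ H ∧ ∀ x b, ∃ i < H, c ((S ^ i) x) = b := by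
  have hfiber (b : B) : ∃ H, HitsWithin S (c ⁻¹' {b}) H :=
    hS.exists_hitsWithin ((isOpen_discrete {b}).preimage hcont) (hc b)
  choose H hH using hfiber
  obtain ⟨N, hN⟩ := Finite.exists_le H
  refine ⟨N + 2, Nat.le_add_left 2 N, fun x b => ?_⟩
  obtain ⟨i, hi, hb⟩ := hH b x
  exact ⟨i, by have := hN b; omega, hb⟩

theorem exists_isSubstitutiveCoding [Finite B] (hS : IsMinimalHomeo S) (hcont : Continuous c)
    (hc : Function.Surjective c) {J : ℕ} (hU : HitsWithin S U J)
    (hren : ∀ L, ∃ Θ η, Renormalization S U c ω Θ η L) :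
    ∃ F t, IsSubstitutiveCoding S c F t := by
  obtain ⟨H, hH2, hH⟩ := hS.exists_code_pow_eq hcont hc
  set V : Set Y := {x | c x = c ω ∧ c (S.symm x) = c (S.symm ω)}
  have hV : IsOpen V := ((isOpen_discrete {c ω}).preimage hcont).inter
    ((isOpen_discrete {c (S.symm ω)}).preimage (hcont.comp hS.continuous_symm))
  obtain ⟨G, hG⟩ := hS.exists_hitsWithin hV ⟨ω, rfl, rfl⟩
  obtain ⟨e, he0, he⟩ := exists_spaced_seq (P := fun n => (S ^ n) ω ∈ V) ⟨rfl, rfl⟩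
    (fun m => by
      obtain ⟨n, -, hn⟩ := hG ((S ^ m) ω)
      exact ⟨n + m, Nat.le_add_left m n, by rwa [pow_add]⟩) H
  obtain ⟨Θ, η, h⟩ := hren (e (J + 1))
  exact ⟨_, _, h.isSubstitutiveCoding hU rfl he0 (fun i => (he i).2) hH2 hH
    (fun i => (he i).1.1) fun i => (he i).1.2⟩

end Renormalization

section WindowCode

variable {A : Type*} [Finite A] [TopologicalSpace A] [DiscreteTopology A]

lemma exists_windowCode (X : Set (ℤ → A)) (K : ℕ) :
    ∃ (N : ℕ) (c : X → Fin N), Continuous c ∧ Function.Surjective c ∧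
      ∀ x y, c x = c y ↔ Agree K x.1 y.1 := by
  let restrict (x : X) : Set.Icc (-K : ℤ) K → A := fun i => x.1 i
  have hrestrict : Continuous restrict := continuous_pi fun i =>
    (continuous_apply (i : ℤ)).comp continuous_subtype_val
  let e := Finite.equivFin (Set.range restrict)
  refine ⟨_, e ∘ Set.rangeFactorization restrict, ?_,
    e.surjective.comp Set.rangeFactorization_surjective, fun x y => ?_⟩
  · exact continuous_of_discreteTopology.comp (hrestrict.subtype_mk Set.mem_range_self)
  · rw [Function.comp_apply, Function.comp_apply, e.apply_eq_iff_eq,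
      Set.rangeFactorization_eq_rangeFactorization_iff, funext_iff, Subtype.forall]
    rfl

lemma exists_agree_map {X : Set (ℤ → A)} [CompactSpace X] {g : X → X} (hg : Continuous g)
    (K : ℕ) : ∃ K', ∀ x y : X, Agree K' x.1 y.1 → Agree K (g x).1 (g y).1 := by
  obtain ⟨N, c, hc, -, hcK⟩ := exists_windowCode X K
  obtain ⟨K', hK'⟩ := exists_agree_of_continuous (hc.comp hg)
  exact ⟨K', fun x y hxy => (hcK _ _).1 (hK' x y hxy)⟩

lemma isClopen_setOf_agree (X : Set (ℤ → A)) (K : ℕ) (ω : X) :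
    IsClopen {x : X | Agree K x.1 ω.1} := by
  obtain ⟨N, c, hc, -, hcK⟩ := exists_windowCode X K
  simp only [← hcK]
  exact (isClopen_discrete {c ω}).preimage hc

end WindowCode

section Speedup

variable {A : Type*} {X : Set (ℤ → A)} {p : (ℤ → A) → ℕ} {M ρ : ℕ} {S : Equiv.Perm X}

lemma coe_pow_apply (hSp : ∀ x, (S x).1 = shiftBy (p x.1) x.1) (n : ℕ) (x : X) :
    ((S ^ n) x).1 = shiftBy ((stepPos p x.1)^[n] 0) x.1 := by
  induction n with
  | zero => rw [Function.iterate_zero_apply, shiftBy_zero, pow_zero, Equiv.Perm.one_apply]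
  | succ n ih =>
    rw [pow_succ', Equiv.Perm.mul_apply, hSp, ih, shiftBy_shiftBy, Function.iterate_succ_apply',
      stepPos, add_comm]

lemma IsLocalJump.pow_apply_ne (hp : IsLocalJump X p M ρ)
    (hSp : ∀ x, (S x).1 = shiftBy (p x.1) x.1)
    (haper : ∀ x ∈ X, ∀ n : ℕ, 0 < n → shiftMap^[n] x ≠ x) (x : X) (n : ℕ) (hn : 0 < n) :
    (S ^ n) x ≠ x := by
  intro hx
  have hle := hp.add_le_iterate_stepPos x.1 0 n
  obtain ⟨k, hk⟩ := Int.eq_ofNat_of_zero_le (a := (stepPos p x.1)^[n] 0) (by omega)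
  refine haper x.1 x.2 k (by omega) ?_
  rw [iterate_shiftMap, ← hk, ← coe_pow_apply hSp, hx]

/-- The words read off by the successive jumps of the speedup concatenate to the sequence
itself. -/
lemma IsLocalJump.injective_itinerary [Nonempty A] {B : Type*} {c : X → B} {K : ℕ}
    (hp : IsLocalJump X p M ρ) (hSp : ∀ x, (S x).1 = shiftBy (p x.1) x.1)
    (hc : Function.Surjective c) (hcK : ∀ x y, c x = c y → Agree K x.1 y.1)
    (hM : M ≤ K) (hρ : ρ ≤ K) : Function.Injective (itinerary S c) := by
  obtain ⟨σ, hσ⟩ : ∃ σ : B → List A, ∀ x, σ (c x) = window x.1 0 (p x.1) := by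
    refine ⟨Function.extend c (fun x => window x.1 0 (p x.1)) fun _ => [],
      Function.FactorsThrough.extend_apply (fun x y hxy => ?_) _⟩
    have := hp.le x.1
    rw [← hp.congr x.1 x.2 y.1 y.2 ((hcK x y hxy).mono hρ)]
    exact (hcK x y hxy).window_eq (by omega) (by omega)
  have hlen (x : X) : (σ (c x)).length = p x.1 := by rw [hσ, length_window]
  have hσne : NonErasing σ := by
    intro b
    obtain ⟨x, rfl⟩ := hc b
    exact List.length_pos_iff.1 (hlen x ▸ hp.pos x.1)
  have hpos (x : X) (i : ℤ) :
      ((S ^ i) x).1 = shiftBy (cutPos σ (itinerary S c x) i) x.1 := by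
    refine eq_act_cutPos (f := fun i => ((S ^ i) x).1) shiftBy_zero shiftBy_shiftBy (fun i => ?_) i
    rw [itinerary, hlen, add_comm i 1, zpow_one_add, Equiv.Perm.mul_apply, hSp]
  have himage (x : X) : x.1 = substImage σ (itinerary S c x) := hσne.eq_substImage fun i => by
    have h := hσ ((S ^ i) x)
    rwa [← hlen, hpos, window_shiftBy, zero_add, eq_comm] at h
  exact fun x y hxy => Subtype.ext ((himage x).trans (hxy ▸ (himage y).symm))

end Speedup

section StepCount

variable {A : Type*} {X : Set (ℤ → A)} {p : (ℤ → A) → ℕ} {M ρ : ℕ} {x y : ℤ → A} {k : ℤ}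

/-- The number of steps after which the speedup with jump function `p` has moved the origin of
`x` to `k` or beyond. -/
noncomputable def stepCount (p : (ℤ → A) → ℕ) (x : ℤ → A) (k : ℤ) : ℕ :=
  sInf {n : ℕ | k ≤ (stepPos p x)^[n] 0}

lemma iterate_stepPos_lt_of_lt_stepCount {n : ℕ} (hn : n < stepCount p x k) :
    (stepPos p x)^[n] 0 < k :=
  not_le.1 (Nat.notMem_of_lt_sInf hn)

namespace IsLocalJump

lemma le_iterate_stepCount (hp : IsLocalJump X p M ρ) (x : ℤ → A) (k : ℤ) :
    k ≤ (stepPos p x)^[stepCount p x k] 0 := by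
  refine Nat.sInf_mem (s := {n : ℕ | k ≤ (stepPos p x)^[n] 0}) ⟨k.toNat, ?_⟩
  have := hp.add_le_iterate_stepPos x 0 k.toNat
  rw [Set.mem_ofPred_eq]
  omega

lemma iterate_stepCount_of_reaches (hp : IsLocalJump X p M ρ) (h : Reaches p x 0 k) :
    (stepPos p x)^[stepCount p x k] 0 = k := by
  obtain ⟨n, rfl⟩ := h
  have hle : stepCount p x ((stepPos p x)^[n] 0) ≤ n := Nat.sInf_le (le_refl ((stepPos p x)^[n] 0))
  exact ((hp.strictMono_iterate_stepPos x 0).monotone hle).antisymm (hp.le_iterate_stepCount x _)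

lemma le_stepCount (hp : IsLocalJump X p M ρ) (x : ℤ → A) {L : ℕ} (hL : (M * L : ℕ) ≤ k) :
    L ≤ stepCount p x k := by
  have hM : 0 < M := (hp.pos x).trans (hp.le x)
  have h := hL.trans ((hp.le_iterate_stepCount x k).trans (hp.iterate_stepPos_le x 0 _))
  rw [zero_add] at h
  exact Nat.le_of_mul_le_mul_left (by exact_mod_cast h) hM

lemma stepCount_congr (hp : IsLocalJump X p M ρ) (hx : x ∈ X) (hy : y ∈ X)
    (hxy : Set.EqOn x y (Set.Ico (-ρ) (k + ρ))) : stepCount p x k = stepCount p y k := by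
  have hlt {x y : ℤ → A} (hx : x ∈ X) (hy : y ∈ X) (hxy : Set.EqOn x y (Set.Ico (-ρ) (k + ρ)))
      {n : ℕ} (hn : (stepPos p x)^[n] 0 < k) : (stepPos p y)^[n] 0 < k := by
    rwa [← hp.iterate_stepPos_congr hx hy (by simpa using hxy) hn.le]
  rw [stepCount, stepCount]
  congr 1
  ext n
  exact not_lt.symm.trans ((not_congr ⟨hlt hx hy hxy, hlt hy hx hxy.symm⟩).trans not_lt)

end IsLocalJump

end StepCount

section Exit

variable {A : Type*} {X : Set (ℤ → A)} {p : (ℤ → A) → ℕ} {M ρ J : ℕ} {S : Equiv.Perm X}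
  {U : Set X}

/-- The position of the origin of `S x` in the base point below `x`. -/
noncomputable def exitPos (p : (ℤ → A) → ℕ) (S : Equiv.Perm X) (U : Set X) (x : X) : ℤ :=
  (stepPos p (base S U x).1)^[lastVisit S U x + 1] 0

lemma shiftBy_exitPos_base (hSp : ∀ x, (S x).1 = shiftBy (p x.1) x.1) (x : X) :
    shiftBy (exitPos p S U x) (base S U x).1 = (S x).1 := by
  rw [exitPos, ← coe_pow_apply hSp, pow_succ', Equiv.Perm.mul_apply, pow_lastVisit_base]

lemma reaches_exitPos (x : X) : Reaches p (base S U x).1 0 (exitPos p S U x) := ⟨_, rfl⟩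

namespace IsLocalJump

lemma one_le_exitPos (hp : IsLocalJump X p M ρ) (x : X) : 1 ≤ exitPos p S U x := by
  have := hp.add_le_iterate_stepPos (base S U x).1 0 (lastVisit S U x + 1)
  rw [exitPos]
  omega

lemma exitPos_le (hp : IsLocalJump X p M ρ) (hU : HitsWithin S U J) (x : X) :
    exitPos p S U x ≤ (M * (J + 1) : ℕ) := by
  refine (hp.iterate_stepPos_le _ _ _).trans ?_
  rw [zero_add]
  exact_mod_cast Nat.mul_le_mul_left M (Nat.succ_le_succ (hU.lastVisit_le x))

lemma exitPos_congr (hp : IsLocalJump X p M ρ) (hU : HitsWithin S U J) {x y : X}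
    (hvisit : lastVisit S U x = lastVisit S U y)
    (hbase : Agree (M * (J + 1) + ρ) (base S U x).1 (base S U y).1) :
    exitPos p S U x = exitPos p S U y := by
  have hle := hp.exitPos_le hU x
  rw [exitPos, exitPos, ← hvisit]
  exact hp.iterate_stepPos_congr (base S U x).2 (base S U y).2
    (hbase.eqOn_Ico (by omega) (by omega)) hle

end IsLocalJump

end Exit

section TowerCode

variable {A : Type*} [Finite A] [TopologicalSpace A] [DiscreteTopology A] {X : Set (ℤ → A)}
  [CompactSpace X] {S : Equiv.Perm X} {U : Set X} {J : ℕ}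

lemma HitsWithin.exists_agree_imp_tower (hU : HitsWithin S U J) (hS : IsMinimalHomeo S)
    (hUc : IsClopen U) (G : ℕ) :
    ∃ R, ∀ x y : X, Agree R x.1 y.1 → lastVisit S U x = lastVisit S U y ∧
      (S x ∈ U ↔ S y ∈ U) ∧ Agree G (base S U x).1 (base S U y).1 := by
  have hvisit := hU.continuous_lastVisit hS hUc
  obtain ⟨R₁, hR₁⟩ := exists_agree_of_continuous hvisit
  obtain ⟨R₂, hR₂⟩ := exists_agree_of_continuous (hvisit.comp hS.continuous)
  obtain ⟨R₃, hR₃⟩ := exists_agree_map (hU.continuous_base hS hUc) G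
  refine ⟨R₁ + R₂ + R₃, fun x y hxy => ⟨hR₁ x y (hxy.mono (by omega)), ?_,
    hR₃ x y (hxy.mono (by omega))⟩⟩
  rw [← hU.lastVisit_eq_zero_iff, ← hU.lastVisit_eq_zero_iff]
  exact Eq.congr_left (hR₂ x y (hxy.mono (by omega)))

end TowerCode

section SelfSimilarity

variable {A : Type*} [Nonempty A] {θ : A → List A}

/-- The substitution `θ^n` as a self-map of the substitution subshift of `θ`. -/
noncomputable def NonErasing.imageMap (hθ : NonErasing θ) (n : ℕ) (x : substShift θ) :
    substShift θ :=
  ⟨substImage (substIter θ n) x.1, hθ.substImage_mem_substShift x.2 n⟩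

variable {d : ℕ} {l r : A} {p : (ℤ → A) → ℕ} {M ρ : ℕ} {S : Equiv.Perm (substShift θ)}

namespace ProperPrimitiveFrom

lemma agree_pow_imageMap (h : ProperPrimitiveFrom θ d l r) (hp : IsLocalJump (substShift θ) p M ρ)
    (hSp : ∀ x, (S x).1 = shiftBy (p x.1) x.1) {k n R : ℕ} (hn : d ≤ n)
    (hk : ∀ a, R + ρ ≤ (substIter θ k a).length) {x y : substShift θ} {s : ℤ} (hs : 0 < s)
    (hxy : Set.EqOn x.1 y.1 (Set.Ico 0 s)) {m : ℕ}
    (hm : (stepPos p (h.nonErasing.imageMap (k + n) x).1)^[m] 0 <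
      cutPos (substIter θ (k + n)) x.1 s) :
    Agree R ((S ^ m) (h.nonErasing.imageMap (k + n) x)).1
      ((S ^ m) (h.nonErasing.imageMap (k + n) y)).1 := by
  have himage := h.substImage_eqOn_around hn hk hs.le hxy
  have heq := hp.iterate_stepPos_congr (h.nonErasing.imageMap (k + n) x).2
    (h.nonErasing.imageMap (k + n) y).2
    (himage.mono (Set.Ico_subset_Ico (by omega) (by omega))) hm.le
  have hnonneg := hp.add_le_iterate_stepPos (h.nonErasing.imageMap (k + n) x).1 0 m
  rw [coe_pow_apply hSp, coe_pow_apply hSp, ← heq]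
  exact fun i ⟨hi, hi'⟩ => himage ⟨by omega, by omega⟩

variable {U : Set (substShift θ)} {J : ℕ}

/-- The number of steps of the speedup between the images of two successive base points. -/
noncomputable def imageTime (h : ProperPrimitiveFrom θ d l r) (p : (ℤ → A) → ℕ)
    (S : Equiv.Perm (substShift θ)) (U : Set (substShift θ)) (n : ℕ) (x : substShift θ) : ℕ :=
  stepCount p (h.nonErasing.imageMap n (base S U x)).1
    (cutPos (substIter θ n) (base S U x).1 (exitPos p S U x))

lemma imageMap_apply (h : ProperPrimitiveFrom θ d l r) (hp : IsLocalJump (substShift θ) p M ρ)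
    (hSp : ∀ x, (S x).1 = shiftBy (p x.1) x.1) {n : ℕ} {x : substShift θ}
    (hreach : Reaches p (h.nonErasing.imageMap n (base S U x)).1 0
      (cutPos (substIter θ n) (base S U x).1 (exitPos p S U x))) :
    h.nonErasing.imageMap n (S x) =
      (S ^ h.imageTime p S U n x) (h.nonErasing.imageMap n (base S U x)) := by
  apply Subtype.ext
  rw [coe_pow_apply hSp, imageTime, hp.iterate_stepCount_of_reaches hreach, NonErasing.imageMap,
    NonErasing.imageMap, ← (h.nonErasing.iter n).substImage_shiftBy, shiftBy_exitPos_base hSp]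

lemma le_imageTime (h : ProperPrimitiveFrom θ d l r) (hp : IsLocalJump (substShift θ) p M ρ)
    {n L : ℕ} (hL : ∀ a, M * L ≤ (substIter θ n a).length) (x : substShift θ) :
    L ≤ h.imageTime p S U n x := by
  refine hp.le_stepCount _ (le_trans ?_
    (((h.nonErasing.iter n).strictMono_cutPos _).monotone (hp.one_le_exitPos x)))
  rw [cutPos_one]
  exact_mod_cast hL _

lemma imageTime_congr (h : ProperPrimitiveFrom θ d l r) (hp : IsLocalJump (substShift θ) p M ρ)
    {k n : ℕ} (hn : d ≤ n) (hk : ∀ a, ρ ≤ (substIter θ k a).length) {x y : substShift θ}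
    (hexit : exitPos p S U x = exitPos p S U y)
    (hbase : Set.EqOn (base S U x).1 (base S U y).1 (Set.Ico 0 (exitPos p S U x))) :
    h.imageTime p S U (k + n) x = h.imageTime p S U (k + n) y := by
  have hpos := hp.one_le_exitPos (S := S) (U := U) x
  rw [imageTime, imageTime, ← hexit, ← cutPos_congr le_rfl (by omega) hbase ⟨by omega, le_rfl⟩]
  exact hp.stepCount_congr (Subtype.prop _) (Subtype.prop _)
    (h.substImage_eqOn_around hn hk (by omega) hbase)

theorem renormalization {B : Type*} {c : substShift θ → B} {ω : substShift θ}
    (h : ProperPrimitiveFrom θ d l r) (hp : IsLocalJump (substShift θ) p M ρ)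
    (hSp : ∀ x, (S x).1 = shiftBy (p x.1) x.1) (hU : HitsWithin S U J) {R R' L k n : ℕ}
    (hω : h.nonErasing.imageMap (k + n) ω = ω) (hUω : ∀ x ∈ U, x.1 0 = ω.1 0)
    (hcR : ∀ x y, c x = c y ↔ Agree R x.1 y.1)
    (htower : ∀ x y : substShift θ, Agree R x.1 y.1 → lastVisit S U x = lastVisit S U y ∧
      (S x ∈ U ↔ S y ∈ U) ∧ Agree (M * (J + 1) + ρ) (base S U x).1 (base S U y).1)
    (hsymm : ∀ x y : substShift θ, Agree R' x.1 y.1 → c (S.symm x) = c (S.symm y))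
    (hn : d ≤ n) (hk : ∀ a, M * L + R + R' + ρ + 1 ≤ (substIter θ k a).length)
    (hreach : ∀ x, S x ∈ U → Reaches p (h.nonErasing.imageMap (k + n) (base S U x)).1 0
      (cutPos (substIter θ (k + n)) (base S U x).1 (exitPos p S U x))) :
    Renormalization S U c ω (h.nonErasing.imageMap (k + n)) (h.imageTime p S U (k + n)) L := by
  have hML (a : A) : M * L < (substIter θ (k + n) a).length := by
    have := hk a
    have := h.nonErasing.length_substIter_mono (Nat.le_add_right k n) a
    omega
  have hR (a : A) : R + ρ ≤ (substIter θ k a).length := by have := hk a; omega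
  have hR' (a : A) : R' + ρ ≤ (substIter θ k a).length := by have := hk a; omega
  have hcut (x : substShift θ) : (M * L : ℕ) < cutPos (substIter θ (k + n)) x.1 1 := by
    rw [cutPos_one]
    exact_mod_cast hML _
  have hexit {x y : substShift θ} (hxy : c x = c y) : exitPos p S U x = exitPos p S U y ∧
      Set.EqOn (base S U x).1 (base S U y).1 (Set.Ico 0 (exitPos p S U x)) := by
    obtain ⟨hvisit, -, hbase⟩ := htower x y ((hcR x y).1 hxy)
    have := hp.exitPos_le hU x
    exact ⟨hp.exitPos_congr hU hvisit hbase, hbase.eqOn_Ico (by omega) (by omega)⟩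
  have horigin {x : substShift θ} (hx : x ∈ U) : Set.EqOn x.1 ω.1 (Set.Ico 0 1) :=
    fun i ⟨hi, hi'⟩ => by rw [show i = 0 by omega, hUω x hx]
  refine ⟨fun x y hxy => (htower x y ((hcR x y).1 hxy)).1,
    fun x y hxy => (htower x y ((hcR x y).1 hxy)).2.1,
    fun x hx => h.imageMap_apply hp hSp (hreach x hx),
    h.le_imageTime hp fun a => (hML a).le,
    fun x y hxy => h.imageTime_congr hp hn (fun a => (Nat.le_add_left ρ R).trans (hR a))
      (hexit hxy).1 (hexit hxy).2,
    fun x y hxy i hi => ?_, fun x hx i hi => ?_, fun x hx => ?_⟩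
  · exact (hcR _ _).2 (h.agree_pow_imageMap hp hSp hn hR (hp.one_le_exitPos x) (hexit hxy).2
      (iterate_stepPos_lt_of_lt_stepCount hi))
  · rw [hcR, ← congrArg (S ^ i) hω]
    refine h.agree_pow_imageMap hp hSp hn hR one_pos (horigin hx)
      (((hp.iterate_stepPos_le _ _ _).trans ?_).trans_lt (hcut x))
    rw [zero_add]
    exact_mod_cast Nat.mul_le_mul_left M hi.le
  · have himage := h.agree_pow_imageMap hp hSp hn hR' one_pos (horigin hx) (m := 0)
      ((Nat.cast_nonneg _).trans_lt (hcut x))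
    rw [hω] at himage
    exact hsymm _ _ himage

variable [Finite A] [TopologicalSpace A] [DiscreteTopology A]

theorem exists_subst_homeomorph (h : ProperPrimitiveFrom θ d l r) (haper : SubstAperiodic θ)
    (hp : IsLocalJump (substShift θ) p M ρ) (hS : IsMinimalHomeo S)
    (hSp : ∀ x, (S x).1 = shiftBy (p x.1) x.1) :
    ∃ (N : ℕ) (τ : Fin N → List (Fin N)), 0 < N ∧ (∀ b, τ b ≠ []) ∧
      SubstProper τ ∧ SubstPrimitive τ ∧ SubstAperiodic τ ∧
      ∃ ψ : substShift θ ≃ₜ substShift τ, ∀ x, (ψ (S x) : ℤ → Fin N) = shiftMap (ψ x) := by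
  obtain ⟨ω, hωθ, hω⟩ := h.exists_fixedPoint
  have hne : Nonempty (substShift θ) := ⟨⟨ω, hωθ⟩⟩
  obtain ⟨K, hK⟩ := h.exists_reaches_substImage haper hp hω
  set U : Set (substShift θ) := {x | Agree K x.1 ω}
  have hUc : IsClopen U := isClopen_setOf_agree _ K ⟨ω, hωθ⟩
  obtain ⟨J, hU⟩ := hS.exists_hitsWithin hUc.isOpen ⟨⟨ω, hωθ⟩, Set.eqOn_refl ω _⟩
  obtain ⟨R, hR⟩ := hU.exists_agree_imp_tower hS hUc (M * (J + 1) + ρ)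
  obtain ⟨N, c, hcont, hc, hcR⟩ := exists_windowCode (substShift θ) (R + M + ρ)
  obtain ⟨R', hR'⟩ := exists_agree_of_continuous (hcont.comp hS.continuous_symm)
  obtain ⟨F, t, hF⟩ := exists_isSubstitutiveCoding (ω := ⟨ω, hωθ⟩) hS hcont hc hU fun L => by
    obtain ⟨k, hk⟩ := h.exists_le_length (M * L + (R + M + ρ) + R' + ρ + 1)
    obtain ⟨q, hq, hreach⟩ := hK (k + d)
    obtain ⟨n, rfl⟩ := Nat.exists_eq_add_of_le (show k ≤ q by omega)
    refine ⟨_, _, h.renormalization hp hSp hU (Subtype.ext (hω _))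
      (fun x hx => hx ⟨by omega, by omega⟩) hcR
      (fun x y hxy => hR x y (hxy.mono (by omega))) hR' (by omega) (hk k le_rfl)
      fun x hx => hreach _ (base S U x).2 _ (hp.one_le_exitPos x) (hU.base_mem x) ?_
        (reaches_exitPos x)⟩
    rwa [shiftBy_exitPos_base hSp]
  obtain ⟨τ, hτ⟩ := hF.exists_subst_homeomorph hS hcont hc
    (hp.injective_itinerary hSp hc (fun x y => (hcR x y).1) (by omega) (by omega))
    (hp.pow_apply_ne hSp haper)
  exact ⟨N, τ, (c ⟨ω, hωθ⟩).pos, hτ⟩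

end ProperPrimitiveFrom

end SelfSimilarity

section JumpFunction

variable {A : Type*} {θ : A → List A} {T S : Equiv.Perm (substShift θ)} {p : substShift θ → ℕ}
  {M : ℕ}

lemma coe_shift_pow_apply (hT : ∀ x : substShift θ, (T x : ℤ → A) = shiftMap x) (k : ℕ)
    (x : substShift θ) : ((T ^ k) x : ℤ → A) = shiftBy k x.1 := by
  rw [← iterate_shiftMap, Equiv.Perm.coe_pow]
  exact (Function.Semiconj.iterate_right (f := Subtype.val) hT k) x

lemma shiftBy_natCast_injective (haper : SubstAperiodic θ) {x : ℤ → A} (hx : x ∈ substShift θ) :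
    Function.Injective fun i : ℕ => shiftBy i x := by
  intro i j hij
  wlog hle : i ≤ j generalizing i j
  · exact (this hij.symm (le_of_not_ge hle)).symm
  obtain ⟨k, rfl⟩ := Nat.exists_eq_add_of_le' hle
  by_contra hk
  refine haper _ (shiftBy_mem_substShift hx i) k (by omega) ?_
  rw [iterate_shiftMap, shiftBy_shiftBy, ← Nat.cast_add]
  exact hij.symm

variable [TopologicalSpace A] [DiscreteTopology A]

/-- The level sets of the jump function are closed, and there are finitely many of them. -/
lemma continuous_jump (haper : SubstAperiodic θ)
    (hT : ∀ x : substShift θ, (T x : ℤ → A) = shiftMap x) (hM : ∀ x, p x ≤ M)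
    (hS : Continuous S) (hSp : ∀ x, S x = (T ^ p x) x) : Continuous p := by
  have hlevel (i : ℕ) : IsClosed (p ⁻¹' {i}) := by
    have e : p ⁻¹' {i} = {x | (S x).1 = shiftBy i x.1} := by
      ext x
      rw [Set.mem_ofPred_eq, hSp, coe_shift_pow_apply hT]
      exact (shiftBy_natCast_injective haper x.2).eq_iff.symm
    rw [e]
    exact isClosed_eq (continuous_subtype_val.comp hS)
      ((continuous_shiftBy i).comp continuous_subtype_val)
  refine continuous_iff_isClosed.2 fun s _ => ?_
  have e : p ⁻¹' s = ⋃ i ∈ s ∩ Set.Iic M, p ⁻¹' {i} := by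
    ext x
    simp [hM x]
  rw [e]
  exact ((Set.finite_Iic M).inter_of_right s).isClosed_biUnion fun i _ => hlevel i

lemma exists_isLocalJump [Finite A] (hp : Continuous p) (hp1 : ∀ x, 1 ≤ p x)
    (hM : ∀ x, p x ≤ M) : ∃ (P : (ℤ → A) → ℕ) (ρ : ℕ),
      IsLocalJump (substShift θ) P (M + 1) ρ ∧ ∀ x, P x.1 = p x := by
  obtain ⟨ρ, hρ⟩ := exists_agree_of_continuous hp
  let P := Function.extend Subtype.val p fun _ => 1
  have hP (x : substShift θ) : P x.1 = p x := Subtype.val_injective.extend_apply _ _ x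
  have hbound (x : ℤ → A) : 1 ≤ P x ∧ P x ≤ M + 1 := by
    by_cases hx : x ∈ substShift θ
    · rw [hP ⟨x, hx⟩]
      exact ⟨hp1 _, (hM _).trans M.le_succ⟩
    · have hPx : P x = 1 :=
        Function.extend_apply' _ _ _ fun ⟨y, hy⟩ => hx (hy ▸ y.2)
      omega
  exact ⟨P, ρ, ⟨fun x hx => shiftBy_mem_substShift hx, fun x => (hbound x).1,
    fun x => (hbound x).2, fun x hx y hy hxy => by
      rw [hP ⟨x, hx⟩, hP ⟨y, hy⟩, hρ ⟨x, hx⟩ ⟨y, hy⟩ hxy]⟩, hP⟩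

end JumpFunction

/-- A minimal bounded speedup `S` of a proper, primitive, aperiodic
substitution subshift `(X^θ, T)` is topologically conjugate to a substitution subshift:
there are a finite alphabet (taken to be `Fin N`), a proper, primitive, aperiodic
substitution `τ` on it, and a homeomorphism `ψ` from `X^θ` to `X^τ` intertwining `S`
with the shift on `X^τ`. -/
theorem boundedSpeedup_of_substitution_is_substitution
    {A : Type*} [Fintype A] [Nonempty A] [TopologicalSpace A] [DiscreteTopology A]
    (θ : A → List A) (hθne : ∀ a, θ a ≠ [])
    (hproper : SubstProper θ) (hprim : SubstPrimitive θ) (haper : SubstAperiodic θ)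
    (T : Equiv.Perm ↥(substShift θ))
    (hT : ∀ x : ↥(substShift θ), ((T x : ℤ → A)) = shiftMap (x : ℤ → A))
    (p : ↥(substShift θ) → ℕ) (hp1 : ∀ x, 1 ≤ p x) (hpbdd : ∃ M : ℕ, ∀ x, p x ≤ M)
    (S : Equiv.Perm ↥(substShift θ)) (hSc : Continuous S) (hSc' : Continuous S.symm)
    (hSp : ∀ x, S x = (T ^ p x) x)
    (hSmin : ∀ x : ↥(substShift θ), Dense (Set.range fun n : ℤ => (S ^ n) x)) :
    ∃ (N : ℕ) (τ : Fin N → List (Fin N)), 0 < N ∧ (∀ b, τ b ≠ []) ∧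
      SubstProper τ ∧ SubstPrimitive τ ∧ SubstAperiodic τ ∧
      ∃ ψ : ↥(substShift θ) ≃ₜ ↥(substShift τ),
        ∀ x : ↥(substShift θ),
          ((ψ (S x) : ↥(substShift τ)) : ℤ → Fin N) =
            shiftMap ((ψ x : ↥(substShift τ)) : ℤ → Fin N) := by
  obtain ⟨M, hM⟩ := hpbdd
  obtain ⟨d, l, r, h⟩ := NonErasing.exists_properPrimitiveFrom hθne hproper hprim
  have hpc : Continuous p := continuous_jump haper hT hM hSc hSp
  obtain ⟨P, ρ, hP, hPp⟩ := exists_isLocalJump hpc hp1 hM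
  exact h.exists_subst_homeomorph haper hP ⟨hSc, hSc', hSmin⟩ fun x => by
    rw [hPp, hSp, coe_shift_pow_apply hT]
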